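/- arXiv:1907.00632 — 4 statements merged into one kernel-verified Lean document; each statement's English description precedes it below -/
import Mathlib

section
/- Fix an integer l ≥ 1. Let X_n^{(l)} be the number of blocks of size l in a uniformly random non-crossing partition of [n], and let Var(X_n^{(l)}) = (1/C_n)·Σ_{π ∈ NC(n)} k_l(π)² − ((1/C_n)·Σ_{π ∈ NC(n)} k_l(π))². Then Var(X_n^{(l)}) = (n/2^{2l+3})·(2^{l+2} − (l − 1)² − 2) + O(1); that is, there exists a constant K (possibly depending on l) such that |Var(X_n^{(l)}) − (n/2^{2l+3})·(2^{l+2} − (l − 1)² − 2)| ≤ K for all n ≥ 1. -/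
/-- A finite partition of `Fin n` (representing `[n] = {1, …, n}`) is *non-crossing* if
there are no indices `a < b < c < d` with `a, c` in one block and `b, d` in a
different block. -/
def IsNonCrossing {n : ℕ} (P : Finpartition (Finset.univ : Finset (Fin n))) : Prop :=
  ∀ a b c d : Fin n, a < b → b < c → c < d →
    ∀ B ∈ P.parts, ∀ B' ∈ P.parts,
      a ∈ B → c ∈ B → b ∈ B' → d ∈ B' → B = B'

/-- The type of non-crossing partitions of `[n]`. -/
def NCPart (n : ℕ) : Type :=
  {P : Finpartition (Finset.univ : Finset (Fin n)) // IsNonCrossing P}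

noncomputable instance (n : ℕ) : Fintype (NCPart n) :=
  Fintype.ofInjective (fun P => P.1.parts)
    (fun _ _ h => Subtype.ext (Finpartition.ext h))

/-- The number of blocks of a non-crossing partition. -/
def numBlocks {n : ℕ} (P : NCPart n) : ℕ := P.1.parts.card

/-- The number of blocks of size `l` of a non-crossing partition. -/
def numBlocksOfSize {n : ℕ} (l : ℕ) (P : NCPart n) : ℕ :=
  (P.1.parts.filter fun B => B.card = l).card

/-- The variance of the number of blocks of size `l` of a uniformly random non-crossing
partition of `[n]`. -/
noncomputable def varBlocksOfSize (l n : ℕ) : ℝ :=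
  (∑ π : NCPart n, (numBlocksOfSize l π : ℝ) ^ 2) / (Fintype.card (NCPart n) : ℝ) -
    ((∑ π : NCPart n, (numBlocksOfSize l π : ℝ)) / (Fintype.card (NCPart n) : ℝ)) ^ 2


section surj

/-- height of the path -/
def hgt (g : ℕ → ℕ) (k : ℕ) : ℤ := (∑ i ∈ Finset.range k, (g i : ℤ)) - k

lemma hgt_succ (g : ℕ → ℕ) (k : ℕ) : hgt g (k+1) = hgt g k + g k - 1 := by
  simp [hgt, Finset.sum_range_succ]; ring

lemma records_card (h : ℕ → ℤ) (hh : ∀ k, h k - 1 ≤ h (k+1)) (k d : ℕ) :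
    ∃ m : ℤ, (∀ j, k ≤ j → j ≤ k + d → m ≤ h j) ∧ (∃ j, k ≤ j ∧ j ≤ k + d ∧ m = h j) ∧
      (((Finset.Ico k (k+d)).filter (fun i => ∀ j, k ≤ j → j ≤ i → h (i+1) < h j)).card : ℤ)
        = h k - m := by
  induction d with
  | zero =>
    refine ⟨h k, ?_, ⟨k, by simp⟩, by simp⟩
    intro j h1 h2
    have : j = k := by omega
    simp [this]
  | succ d ih =>
    obtain ⟨m, h1, ⟨j0, hj1, hj2, hj3⟩, h3⟩ := ih
    rw [← add_assoc, ← Finset.insert_Ico_right_eq_Ico_add_one (by omega), Finset.filter_insert]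
    by_cases hc : ∀ j, k ≤ j → j ≤ k + d → h (k + d + 1) < h j
    · rw [if_pos hc, Finset.card_insert_of_notMem (by simp)]
      have e1 := hh (k+d)
      have e2 := h1 (k+d) (by omega) (by omega)
      have e3 := hc j0 hj1 hj2
      refine ⟨h (k+d+1), ?_, ⟨k+d+1, by omega, by omega, rfl⟩, ?_⟩
      · intro j a b
        rcases Nat.lt_or_ge j (k+d+1) with hlt | hge
        · exact (hc j a (by omega)).le
        · have : j = k+d+1 := by omega
          rw [this]
      · push_cast
        rw [h3]; omega
    · rw [if_neg hc]
      push Not at hc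
      obtain ⟨j1, a1, a2, a3⟩ := hc
      refine ⟨m, ?_, ⟨j0, hj1, by omega, hj3⟩, h3⟩
      intro j a b
      rcases Nat.lt_or_ge j (k+d+1) with hlt | hge
      · exact h1 j a (by omega)
      · have : j = k+d+1 := by omega
        rw [this]
        exact (h1 j1 a1 a2).trans a3

lemma exists_owner (g : ℕ → ℕ) (n : ℕ) (hpos : ∀ k ≤ n, 0 ≤ hgt g k) (hn : hgt g n = 0) :
    ∃ o : ℕ → ℕ, (∀ i < n, o i ≤ i) ∧ (∀ i < n, hgt g (o i) ≤ hgt g (i+1)) ∧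
      (∀ i < n, ∀ j, o i < j → j ≤ i → hgt g (i+1) < hgt g j) ∧
      (∀ j < n, ((Finset.range n).filter (fun i => o i = j)).card = g j) := by
  classical
  set o : ℕ → ℕ := fun i => Nat.findGreatest (fun j => hgt g j ≤ hgt g (i+1)) i with ho
  have h0 : hgt g 0 = 0 := by simp [hgt]
  have o1 : ∀ i, o i ≤ i := fun i => Nat.findGreatest_le i
  have o2 : ∀ i < n, hgt g (o i) ≤ hgt g (i+1) := by
    intro i hi
    refine Nat.findGreatest_spec (P := fun j => hgt g j ≤ hgt g (i+1)) (Nat.zero_le i) ?_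
    rw [h0]; exact hpos _ (by omega)
  have o3 : ∀ i < n, ∀ j, o i < j → j ≤ i → hgt g (i+1) < hgt g j := by
    intro i hi j h1 h2
    exact not_le.1 (Nat.findGreatest_is_greatest h1 h2)
  refine ⟨o, fun i _ => o1 i, o2, o3, ?_⟩
  have key : ∀ k ≤ n, (((Finset.range n).filter (fun i => o i < k)).card : ℤ) = hgt g k + k := by
    intro k hk
    obtain ⟨m, m1, ⟨j0, j1, j2, j3⟩, m3⟩ := records_card (hgt g)
      (fun k => by rw [hgt_succ]; omega) k (n-k)
    rw [Nat.add_sub_cancel' hk] at *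
    have hm : m = 0 := by
      have := m1 n hk le_rfl
      have := hpos j0 j2
      omega
    have hsplit : (Finset.range n).filter (fun i => o i < k) = Finset.range k ∪
        (Finset.Ico k n).filter (fun i => ∀ j, k ≤ j → j ≤ i → hgt g (i+1) < hgt g j) := by
      ext i
      simp only [Finset.mem_filter, Finset.mem_range, Finset.mem_union, Finset.mem_Ico]
      have := o1 i
      constructor
      · rintro ⟨a, b⟩
        by_cases hik : i < k
        · exact Or.inl hik
        · exact Or.inr ⟨⟨by omega, a⟩, fun j c d => o3 i a j (by omega) d⟩
      · rintro (a | ⟨⟨a, b⟩, c⟩)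
        · exact ⟨by omega, by omega⟩
        · refine ⟨b, ?_⟩
          by_contra hcon
          have := c (o i) (by omega) (o1 i)
          have := o2 i b
          omega
    rw [hsplit, Finset.card_union_of_disjoint]
    · push_cast
      rw [m3, hm]; simp; ring
    · rw [Finset.disjoint_left]
      intro i; simp; intros; omega
  intro j hj
  have k1 := key j hj.le
  have k2 := key (j+1) hj
  have : (Finset.range n).filter (fun i => o i < j+1) =
     (Finset.range n).filter (fun i => o i < j) ∪ (Finset.range n).filter (fun i => o i = j) := by
    ext i; simp; omega
  rw [this, Finset.card_union_of_disjoint, hgt_succ] at k2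
  · push_cast at k2; omega
  · rw [Finset.disjoint_left]
    intro i; simp; intros; omega

end surj

section code
open Finset

variable {n : ℕ}

/-- minimum of the block of `x` -/
noncomputable def mn (P : Finpartition (univ : Finset (Fin n))) (x : Fin n) : Fin n :=
  (P.part x).min' ⟨x, by simp⟩

lemma mn_mem (P : Finpartition (univ : Finset (Fin n))) (x : Fin n) : mn P x ∈ P.part x :=
  Finset.min'_mem _ _

lemma mn_le (P : Finpartition (univ : Finset (Fin n))) (x : Fin n) : mn P x ≤ x :=
  Finset.min'_le _ _ (by simp)

lemma part_eq_of_mem_part (P : Finpartition (univ : Finset (Fin n))) {x y : Fin n}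
    (h : y ∈ P.part x) : P.part y = P.part x :=
  P.part_eq_of_mem (by simp) h

lemma mn_eq_of_part_eq (P : Finpartition (univ : Finset (Fin n))) {x y : Fin n}
    (h : P.part x = P.part y) : mn P x = mn P y := by
  unfold mn; simp only [h]

lemma mn_eq_iff (P : Finpartition (univ : Finset (Fin n))) (x y : Fin n) :
    mn P x = mn P y ↔ y ∈ P.part x := by
  constructor
  · intro h
    have h1 := part_eq_of_mem_part P (mn_mem P x)
    have h2 := part_eq_of_mem_part P (mn_mem P y)
    rw [← h1, h, h2]; simp
  · intro h
    exact (mn_eq_of_part_eq P (part_eq_of_mem_part P h)).symm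

lemma mn_mn (P : Finpartition (univ : Finset (Fin n))) (x : Fin n) : mn P (mn P x) = mn P x :=
  mn_eq_of_part_eq P (part_eq_of_mem_part P (mn_mem P x))

lemma mn_nc {P : Finpartition (univ : Finset (Fin n))} (hP : IsNonCrossing P)
    {a b c d : Fin n} (h1 : a < b) (h2 : b < c) (h3 : c < d)
    (hac : mn P a = mn P c) (hbd : mn P b = mn P d) : mn P a = mn P b := by
  have := hP a b c d h1 h2 h3 (P.part a) (by simp) (P.part b) (by simp) (by simp)
    ((mn_eq_iff P a c).1 hac) (by simp) ((mn_eq_iff P b d).1 hbd)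
  exact mn_eq_of_part_eq P this

lemma eq_of_mn_eq {P Q : Finpartition (univ : Finset (Fin n))} (h : ∀ x, mn P x = mn Q x) :
    P = Q := by
  have hp : ∀ x, P.part x = Q.part x := by
    intro x; ext y
    rw [← mn_eq_iff, ← mn_eq_iff, h, h]
  apply Finpartition.ext
  ext B
  constructor
  · intro hB
    obtain ⟨x, hx⟩ := P.nonempty_of_mem_parts hB
    rw [← P.part_eq_of_mem hB hx, hp]; simp
  · intro hB
    obtain ⟨x, hx⟩ := Q.nonempty_of_mem_parts hB
    rw [← Q.part_eq_of_mem hB hx, ← hp]; simp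

/-- The code of a non-crossing partition. -/
noncomputable def code (P : Finpartition (univ : Finset (Fin n))) (i : Fin (n+1)) : ℕ :=
  #{x : Fin n | (mn P x : ℕ) = i}

/-- Periodic extension. -/
def pext (x : Fin (n+1) → ℕ) (i : ℕ) : ℕ := x (Fin.ofNat (n+1) i)

lemma pext_code (P : Finpartition (univ : Finset (Fin n))) {i : ℕ} (hi : i < n+1) :
    pext (code P) i = #{x : Fin n | (mn P x : ℕ) = i} := by
  simp [pext, code, Nat.mod_eq_of_lt hi]

lemma sum_pext_code (P : Finpartition (univ : Finset (Fin n))) {k : ℕ} (hk : k ≤ n+1) :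
    ∑ i ∈ range k, pext (code P) i = #{x : Fin n | (mn P x : ℕ) < k} := by
  rw [Finset.card_eq_sum_card_fiberwise (f := fun x => (mn P x : ℕ)) (t := range k)
    (fun x hx => by simpa using hx)]
  apply Finset.sum_congr rfl
  intro i hi
  rw [mem_range] at hi
  rw [pext_code P (by omega), Finset.filter_filter]
  congr 1
  ext x; simp; omega

lemma hgt_code (P : Finpartition (univ : Finset (Fin n))) {k : ℕ} (hk : k ≤ n) :
    hgt (pext (code P)) k = #{x : Fin n | k ≤ (x:ℕ) ∧ (mn P x : ℕ) < k} := by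
  have h1 := sum_pext_code P (k := k) (by omega)
  unfold hgt
  rw [← Nat.cast_sum, h1]
  have h2 : ({x : Fin n | (mn P x : ℕ) < k} : Finset (Fin n)) =
     ({x : Fin n | (x : ℕ) < k} : Finset (Fin n)) ∪
      ({x : Fin n | k ≤ (x:ℕ) ∧ (mn P x : ℕ) < k} : Finset (Fin n)) := by
    ext x
    have : (mn P x : ℕ) ≤ x := mn_le P x
    simp; omega
  have h3 : #{x : Fin n | (x : ℕ) < k} = k := by
    rw [Fin.card_filter_val_lt]; omega
  rw [h2, Finset.card_union_of_disjoint, h3]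
  · push_cast; ring
  · rw [Finset.disjoint_left]
    intro i; simp; intros; omega

lemma mn_le_hgt {P : Finpartition (univ : Finset (Fin n))} (hP : IsNonCrossing P) (i : Fin n) :
    hgt (pext (code P)) (mn P i) ≤ hgt (pext (code P)) (i+1) := by
  rw [hgt_code P (mn P i).2.le, hgt_code P (Nat.succ_le_of_lt i.2)]
  norm_cast
  apply Finset.card_le_card
  intro x
  simp only [mem_filter, mem_univ, true_and]
  rintro ⟨h1, h2⟩
  have hj := mn_le P i
  have hne : mn P i ≠ x := by
    rintro rfl
    rw [mn_mn] at h2; exact lt_irrefl _ h2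
  have hne2 : i ≠ x := by
    rintro rfl; exact lt_irrefl _ h2
  have hix : i < x := by
    by_contra hcon
    have hxi : x < i := lt_of_le_of_ne (not_lt.1 hcon) (Ne.symm hne2)
    have := mn_nc hP h2 (lt_of_le_of_ne h1 hne) hxi (mn_mn P x) (mn_mn P i)
    rw [mn_mn, mn_mn] at this
    exact h2.ne this
  have : (mn P x : ℕ) < mn P i := h2
  have : (mn P i : ℕ) ≤ i := hj
  exact ⟨hix, by omega⟩

lemma hgt_lt_of_mn_lt {P : Finpartition (univ : Finset (Fin n))} (hP : IsNonCrossing P) (i : Fin n)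
    (k : ℕ) (h1 : (mn P i : ℕ) < k) (h2 : k ≤ i) :
    hgt (pext (code P)) (i+1) < hgt (pext (code P)) k := by
  rw [hgt_code P (h2.trans i.2.le), hgt_code P (Nat.succ_le_of_lt i.2)]
  norm_cast
  apply Finset.card_lt_card
  rw [Finset.ssubset_iff_of_subset]
  · refine ⟨i, ?_, ?_⟩ <;> simp [h1, h2]
  · intro x
    simp only [mem_filter, mem_univ, true_and]
    rintro ⟨a, b⟩
    refine ⟨by omega, ?_⟩
    by_contra hcon
    have c1 : mn P i < mn P x := Fin.lt_def.2 (by omega)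
    have c3 : i < x := Fin.lt_def.2 (by omega)
    have c2 : mn P x < i := by
      apply lt_of_le_of_ne (Fin.le_def.2 (by omega))
      intro h
      rw [← h, mn_mn] at c1; exact lt_irrefl _ c1
    have := mn_nc hP c1 c2 c3 (mn_mn P i) (mn_mn P x)
    rw [mn_mn, mn_mn] at this
    exact c1.ne this

lemma code_injective : Function.Injective (fun P : NCPart n => code P.1) := by
  intro P Q h
  simp only at h
  apply Subtype.ext
  apply eq_of_mn_eq
  intro i
  have a1 := mn_le_hgt P.2 i
  have a2 := hgt_lt_of_mn_lt P.2 i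
  have b1 := mn_le_hgt Q.2 i
  have b2 := hgt_lt_of_mn_lt Q.2 i
  rw [← h] at b1 b2
  have c1 : (mn P.1 i : ℕ) ≤ i := mn_le P.1 i
  have c2 : (mn Q.1 i : ℕ) ≤ i := mn_le Q.1 i
  apply Fin.ext
  rcases lt_trichotomy (mn P.1 i : ℕ) (mn Q.1 i : ℕ) with hlt | heq | hgt
  · exact absurd (a2 _ hlt c2) (not_lt.2 b1)
  · exact heq
  · exact absurd (b2 _ hgt c1) (not_lt.2 a1)

/-- Good sequences. -/
def good (n : ℕ) : Finset (Fin (n+1) → ℕ) :=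
  {x ∈ piAntidiag univ n | ∀ k ≤ n, 0 ≤ hgt (pext x) k}

lemma sum_pext (x : Fin (n+1) → ℕ) : ∑ i ∈ range (n+1), pext x i = ∑ i, x i := by
  rw [← Fin.sum_univ_eq_sum_range]
  apply Finset.sum_congr rfl
  intro i _
  simp [pext]

lemma code_mem (P : Finpartition (univ : Finset (Fin n))) : code P ∈ good n := by
  simp only [good, mem_filter, mem_piAntidiag, mem_univ, implies_true, and_true]
  constructor
  · rw [← sum_pext, sum_pext_code P le_rfl, Finset.filter_true_of_mem, card_univ, Fintype.card_fin]
    intro x _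
    exact (mn P x).2.trans (Nat.lt_succ_self n)
  · intro k hk
    rw [hgt_code P hk]; positivity

lemma code_surj (x : Fin (n+1) → ℕ) (hx : x ∈ good n) : ∃ P : NCPart n, code P.1 = x := by
  classical
  simp only [good, mem_filter, mem_piAntidiag, mem_univ, implies_true, and_true] at hx
  obtain ⟨hs, hx⟩ := hx
  rw [← sum_pext, Finset.sum_range_succ] at hs
  have hn : hgt (pext x) n = 0 := by
    have := hx n le_rfl
    have h2 : (∑ i ∈ range n, pext x i : ℤ) + (pext x n : ℤ) = n := by exact_mod_cast hs
    unfold hgt at *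
    omega
  have hlast : pext x n = 0 := by
    have h2 : (∑ i ∈ range n, pext x i : ℤ) + (pext x n : ℤ) = n := by exact_mod_cast hs
    unfold hgt at *
    omega
  obtain ⟨o, o1, o2, o3, o4⟩ := exists_owner (pext x) n hx hn
  have oo : ∀ i < n, o (o i) = o i := by
    intro i hi
    have e1 := o1 i hi
    have hlt : o i < n := by omega
    have e2 := o1 (o i) hlt
    by_contra hne
    have e3 := o3 (o i) hlt (o i) (by omega) le_rfl
    have e4 := o2 i hi
    rcases Nat.lt_or_ge (o i) i with h | h
    · have := o3 i hi (o i + 1) (by omega) (by omega)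
      omega
    · have : o i = i := by omega
      rw [this] at hne; omega
  let s : Setoid (Fin n) := Setoid.ker (fun i : Fin n => o i)
  let P := Finpartition.ofSetoid s
  have hmem : ∀ a b : Fin n, b ∈ P.part a ↔ o a = o b := fun a b =>
    Finpartition.mem_part_ofSetoid_iff_rel
  have hmn : ∀ i : Fin n, (mn P i : ℕ) = o i := by
    intro i
    have e1 := o1 i i.2
    have h1 : o i = o (mn P i) := (hmem _ _).1 (mn_mem P i)
    have h2 := o1 (mn P i) (mn P i).2
    have h3 : mn P i ≤ ⟨o i, by omega⟩ := by
      apply Finset.min'_le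
      rw [hmem]; exact (oo i i.2).symm
    have h3 : (mn P i : ℕ) ≤ o i := h3
    omega
  have hnc : IsNonCrossing P := by
    intro a b c d hab hbc hcd B hB B' hB' ha hc hb hd
    have hab : (a:ℕ) < b := hab
    have hbc : (b:ℕ) < c := hbc
    have hcd : (c:ℕ) < d := hcd
    rw [← P.part_eq_of_mem hB ha] at hc ⊢
    rw [← P.part_eq_of_mem hB' hb] at hd ⊢
    rw [hmem] at hc hd
    have a1 := o1 a a.2
    have b1 := o1 b b.2
    have c2 := o2 c c.2
    have d2 := o2 d d.2
    rcases lt_trichotomy (o a) (o b) with h | h | h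
    · have e1 := o3 c c.2 (o b) (by omega) (by omega)
      have e2 := o3 d d.2 (c+1) (by omega) (by omega)
      rw [← hd] at d2; omega
    · exact (part_eq_of_mem_part P ((hmem _ _).2 h)).symm
    · have e1 := o3 b b.2 (o a) (by omega) (by omega)
      have e2 := o3 c c.2 (b+1) (by omega) (by omega)
      rw [← hc] at c2; omega
  refine ⟨⟨P, hnc⟩, ?_⟩
  funext i
  have hcard : code P i = #{j ∈ range n | o j = i} := by
    unfold code
    apply Finset.card_bij (fun (j : Fin n) _ => (j : ℕ))
    · intro j hj; simp at hj ⊢; rw [← hmn]; exact hj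
    · intro j _ j' _ h; exact Fin.ext h
    · intro j hj
      simp at hj
      exact ⟨⟨j, hj.1⟩, by simp [hmn, hj.2], rfl⟩
  have hpx : pext x i = x i := by simp [pext]
  change code P i = x i
  rw [hcard]
  rcases Nat.lt_or_ge i n with h | h
  · rw [o4 i h, hpx]
  · have hi : (i:ℕ) = n := by omega
    rw [← hpx, hi, hlast, Finset.card_eq_zero, Finset.filter_eq_empty_iff]
    intro j hj
    rw [mem_range] at hj
    have := o1 j hj
    omega

lemma numBlocks_code (l : ℕ) (hl : 1 ≤ l) (P : NCPart n) :
    numBlocksOfSize l P = #{i : Fin (n+1) | code P.1 i = l} := by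
  classical
  unfold numBlocksOfSize
  have hpart : ∀ x, #{y : Fin n | (mn P.1 y : ℕ) = mn P.1 x} = #(P.1.part x) := by
    intro x
    congr 1
    ext y
    simp only [mem_filter, mem_univ, true_and]
    rw [← mn_eq_iff, Fin.val_inj, eq_comm]
  have hB : ∀ B ∈ P.1.parts, ∃ x, B = P.1.part x := by
    intro B hB
    obtain ⟨x, hx⟩ := P.1.nonempty_of_mem_parts hB
    exact ⟨x, (P.1.part_eq_of_mem hB hx).symm⟩
  apply Finset.card_bij (fun B hB => (B.min' (P.1.nonempty_of_mem_parts
    (Finset.mem_filter.1 hB).1)).castSucc)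
  · intro B hB'
    obtain ⟨h1, h2⟩ := Finset.mem_filter.1 hB'
    obtain ⟨x, rfl⟩ := hB B h1
    simp only [mem_filter, mem_univ, true_and]
    exact (hpart x).trans h2
  · intro B h1 B' h2 h
    obtain ⟨x, rfl⟩ := hB B (Finset.mem_filter.1 h1).1
    obtain ⟨y, rfl⟩ := hB B' (Finset.mem_filter.1 h2).1
    have : mn P.1 x = mn P.1 y := Fin.castSucc_injective _ h
    rw [mn_eq_iff] at this
    exact (part_eq_of_mem_part _ this).symm
  · intro i hi
    simp only [mem_filter, mem_univ, true_and] at hi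
    have hpos : 0 < code P.1 i := by omega
    obtain ⟨x, hx⟩ := Finset.card_pos.1 hpos
    simp only [mem_filter, mem_univ, true_and] at hx
    refine ⟨P.1.part x, ?_, ?_⟩
    · simp only [mem_filter]
      refine ⟨by simp, ?_⟩
      rw [← hpart, ← hi, hx]; rfl
    · apply Fin.ext; exact hx

lemma sum_NC (l : ℕ) (hl : 1 ≤ l) (f : ℕ → ℝ) :
    ∑ P : NCPart n, f (numBlocksOfSize l P) = ∑ x ∈ good n, f #{i | x i = l} := by
  apply Finset.sum_bij (fun P _ => code P.1)
  · intro P _; exact code_mem P.1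
  · intro P _ Q _ h; exact code_injective h
  · intro x hx
    obtain ⟨P, hP⟩ := code_surj x hx
    exact ⟨P, mem_univ _, hP⟩
  · intro P _; rw [numBlocks_code l hl]

end code

section cyc
open Finset

variable {n : ℕ}

/-- rotation -/
def rot (r : Fin (n+1)) (x : Fin (n+1) → ℕ) : Fin (n+1) → ℕ := fun i => x (i + r)

lemma pext_rot (r : Fin (n+1)) (x : Fin (n+1) → ℕ) (i : ℕ) :
    pext (rot r x) i = pext x (r + i) := by
  unfold pext rot
  congr 1
  apply Fin.ext
  simp [Fin.val_add, add_comm]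

lemma hgt_rot (r : Fin (n+1)) (x : Fin (n+1) → ℕ) (k : ℕ) :
    hgt (pext (rot r x)) k = hgt (pext x) (r + k) - hgt (pext x) r := by
  unfold hgt
  simp only [pext_rot]
  rw [Finset.sum_range_add]
  push_cast; ring

lemma hgt_period (x : Fin (n+1) → ℕ) (hx : ∑ i, x i = n) (k : ℕ) :
    hgt (pext x) (n + 1 + k) = hgt (pext x) k - 1 := by
  have h : ∀ i, pext x (n+1+i) = pext x i := by
    intro i; unfold pext; congr 1; apply Fin.ext; simp
  unfold hgt
  rw [Finset.sum_range_add]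
  simp only [h]
  have : (∑ i ∈ range (n+1), (pext x i : ℤ)) = n := by
    rw [← Nat.cast_sum, sum_pext, hx]
  rw [this]; push_cast; ring

lemma sum_rot (r : Fin (n+1)) (x : Fin (n+1) → ℕ) : ∑ i, rot r x i = ∑ i, x i :=
  Equiv.sum_comp (Equiv.addRight r) x

lemma mem_PA (x : Fin (n+1) → ℕ) (m : ℕ) : x ∈ piAntidiag univ m ↔ ∑ i, x i = m := by simp

lemma mem_good (x : Fin (n+1) → ℕ) : x ∈ good n ↔ ∑ i, x i = n ∧ ∀ k ≤ n, 0 ≤ hgt (pext x) k := by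
  simp [good]

lemma exists_unique_rot (x : Fin (n+1) → ℕ) (hx : ∑ i, x i = n) :
    ∃! r : Fin (n+1), rot r x ∈ good n := by
  have hper := hgt_period x hx
  simp only [mem_good, sum_rot, hx, true_and, hgt_rot]
  obtain ⟨r0, -, hr0⟩ := Finset.exists_min_image (univ : Finset (Fin (n+1)))
    (fun r => hgt (pext x) r) ⟨0, mem_univ _⟩
  have hne : ({r : Fin (n+1) | hgt (pext x) r = hgt (pext x) r0} : Finset _).Nonempty :=
    ⟨r0, by simp⟩
  obtain ⟨r, hr, hmin⟩ := Finset.exists_min_image _ (fun r : Fin (n+1) => r) hne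
  simp only [mem_filter, mem_univ, true_and] at hr hmin
  simp only [mem_univ, true_implies] at hr0
  refine ⟨r, ?_, ?_⟩
  · intro k hk
    rcases Nat.lt_or_ge (r + k) (n+1) with h | h
    · have := hr0 ⟨r + k, h⟩
      simp only at this
      omega
    · obtain ⟨j, hj⟩ := Nat.exists_eq_add_of_le h
      have hjr : j < r := by omega
      have hj2 : j < n + 1 := by omega
      rw [hj, hper]
      have h1 := hr0 ⟨j, hj2⟩
      have h2 : hgt (pext x) j ≠ hgt (pext x) r0 := by
        intro he
        have : (r : ℕ) ≤ j := hmin ⟨j, hj2⟩ he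
        omega
      simp only at h1
      omega
  · have key : ∀ a b : Fin (n+1), a < b → (∀ k ≤ n, 0 ≤ hgt (pext x) (a + k) - hgt (pext x) a) →
        (∀ k ≤ n, 0 ≤ hgt (pext x) (b + k) - hgt (pext x) b) → False := by
      intro a b hab ha hb
      have hab : (a:ℕ) < b := hab
      have h1 := ha (b - a) (by omega)
      have h2 := hb (n + 1 + a - b) (by omega)
      rw [show (a:ℕ) + (b - a) = b by omega] at h1
      rw [show (b:ℕ) + (n + 1 + a - b) = n + 1 + a by omega, hper] at h2
      omega
    have hrgood : ∀ k ≤ n, 0 ≤ hgt (pext x) (r + k) - hgt (pext x) r := by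
      intro k hk
      rcases Nat.lt_or_ge (r + k) (n+1) with h | h
      · have := hr0 ⟨r + k, h⟩
        simp only at this
        omega
      · obtain ⟨j, hj⟩ := Nat.exists_eq_add_of_le h
        have hjr : j < r := by omega
        have hj2 : j < n + 1 := by omega
        rw [hj, hper]
        have h1 := hr0 ⟨j, hj2⟩
        have h2 : hgt (pext x) j ≠ hgt (pext x) r0 := by
          intro he
          have : (r : ℕ) ≤ j := hmin ⟨j, hj2⟩ he
          omega
        simp only at h1
        omega
    intro y hy
    rcases lt_trichotomy y r with h | h | h
    · exact (key _ _ h hy hrgood).elim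
    · exact h
    · exact (key _ _ h hrgood hy).elim

lemma sum_good (f : (Fin (n+1) → ℕ) → ℝ) (hf : ∀ r x, f (rot r x) = f x) :
    ∑ x ∈ piAntidiag univ n, f x = (n+1) * ∑ x ∈ good n, f x := by
  classical
  have h1 : ∀ x ∈ piAntidiag (univ : Finset (Fin (n+1))) n,
      f x = ∑ r : Fin (n+1), if rot r x ∈ good n then f (rot r x) else 0 := by
    intro x hx
    obtain ⟨r, hr, hu⟩ := exists_unique_rot x ((mem_PA x n).1 hx)
    rw [Finset.sum_eq_single r]
    · rw [if_pos hr, hf]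
    · intro b _ hb
      rw [if_neg]
      intro h; exact hb (hu b h)
    · simp
  rw [Finset.sum_congr rfl h1, Finset.sum_comm]
  have h2 : ∀ r : Fin (n+1), (∑ x ∈ piAntidiag (univ : Finset (Fin (n+1))) n,
      if rot r x ∈ good n then f (rot r x) else 0) = ∑ x ∈ good n, f x := by
    intro r
    rw [Finset.sum_nbij' (t := piAntidiag (univ : Finset (Fin (n+1))) n) (rot r) (rot (-r))
      (g := fun y => if y ∈ good n then f y else 0)]
    · rw [← Finset.sum_filter]
      apply Finset.sum_congr _ (fun _ _ => rfl)
      ext y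
      simp only [mem_filter, good]
      tauto
    · intro x hx; rw [mem_PA] at *; rw [sum_rot, hx]
    · intro x hx; rw [mem_PA] at *; rw [sum_rot, hx]
    · intro x _; funext i; simp [rot]
    · intro x _; funext i; simp [rot]
    · intro x _; rfl
  rw [Finset.sum_congr rfl (fun r _ => h2 r)]
  simp

lemma card_rot (l : ℕ) (r : Fin (n+1)) (x : Fin (n+1) → ℕ) :
    #{i | rot r x i = l} = #{i | x i = l} := by
  apply Finset.card_equiv (Equiv.addRight r)
  intro i
  rw [mem_filter, mem_filter]
  simp [rot]

lemma card_PA {ι : Type*} [DecidableEq ι] (s : Finset ι) (m : ℕ) :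
    #(piAntidiag s m) = (#s).multichoose m := by
  rw [← card_finsuppAntidiag_nat_eq_multichoose]
  simp [finsuppAntidiag]

lemma card_PA_fix {ι : Type*} [DecidableEq ι] (s : Finset ι) (i : ι) (hi : i ∈ s) (m l : ℕ)
    (p : (ι → ℕ) → Prop) [DecidablePred p] (hp : ∀ f v, p (Function.update f i v) ↔ p f)
    (hl : l ≤ m) :
    #{f ∈ piAntidiag s m | f i = l ∧ p f} = #{f ∈ piAntidiag (s.erase i) (m - l) | p f} := by
  apply Finset.card_nbij' (fun f => Function.update f i 0) (fun f => Function.update f i l)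
  · intro f hf
    simp only [coe_filter, mem_piAntidiag, Set.mem_ofPred_eq] at hf ⊢
    obtain ⟨⟨h1, h2⟩, h3, h4⟩ := hf
    refine ⟨⟨?_, ?_⟩, (hp _ _).2 h4⟩
    · rw [← Finset.add_sum_erase s f hi, h3] at h1
      rw [Finset.sum_update_of_notMem (by simp)]
      omega
    · intro j hj
      by_cases hji : j = i
      · subst hji; simp at hj
      · rw [Function.update_of_ne hji] at hj
        exact mem_erase.2 ⟨hji, h2 j hj⟩
  · intro f hf
    simp only [coe_filter, mem_piAntidiag, Set.mem_ofPred_eq] at hf ⊢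
    obtain ⟨⟨h1, h2⟩, h4⟩ := hf
    refine ⟨⟨?_, ?_⟩, by simp, (hp _ _).2 h4⟩
    · rw [← Finset.add_sum_erase s _ hi, Finset.sum_update_of_notMem (by simp), h1]
      simp; omega
    · intro j hj
      by_cases hji : j = i
      · subst hji; exact hi
      · rw [Function.update_of_ne hji] at hj
        exact (mem_erase.1 (h2 j hj)).2
  · intro f hf
    simp only [coe_filter, mem_piAntidiag, Set.mem_ofPred_eq] at hf
    simp [← hf.2.1]
  · intro f hf
    simp only [coe_filter, mem_piAntidiag, Set.mem_ofPred_eq] at hf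
    have : f i = 0 := by
      by_contra h
      exact absurd (hf.1.2 i h) (by simp)
    simp [← this]

lemma count1 (l : ℕ) (hl : l ≤ n) (i : Fin (n+1)) :
    #{x ∈ piAntidiag (univ : Finset (Fin (n+1))) n | x i = l} = n.multichoose (n - l) := by
  have := card_PA_fix (univ : Finset (Fin (n+1))) i (mem_univ _) n l (fun _ => True)
    (fun _ _ => Iff.rfl) hl
  simp only [and_true, filter_true] at this
  rw [this, card_PA]; simp

lemma count2 (l : ℕ) (hl : 2 * l ≤ n) (i j : Fin (n+1)) (hij : i ≠ j) :
    #{x ∈ piAntidiag (univ : Finset (Fin (n+1))) n | x i = l ∧ x j = l}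
      = (n-1).multichoose (n - 2*l) := by
  rw [card_PA_fix (univ : Finset (Fin (n+1))) i (mem_univ _) n l (fun f => f j = l)
    (fun f v => by rw [Function.update_of_ne hij.symm]) (by omega)]
  have := card_PA_fix ((univ : Finset (Fin (n+1))).erase i) j (by simp [hij.symm]) (n-l) l
    (fun _ => True) (fun _ _ => Iff.rfl) (by omega)
  simp only [and_true, filter_true] at this
  rw [this, card_PA, card_erase_of_mem (by simp [hij.symm]), card_erase_of_mem (mem_univ _)]
  simp only [card_univ, Fintype.card_fin]
  congr 1
  omega

lemma sumX (l : ℕ) (hl : l ≤ n) :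
    ∑ x ∈ piAntidiag (univ : Finset (Fin (n+1))) n, (#{i | x i = l} : ℝ)
      = (n+1) * n.multichoose (n - l) := by
  have : ∀ x : Fin (n+1) → ℕ, (#{i | x i = l} : ℝ) = ∑ i, if x i = l then 1 else 0 := by
    intro x; simp
  simp only [this]
  rw [Finset.sum_comm]
  simp only [Finset.sum_boole, count1 l hl]
  simp

lemma sumXX (l : ℕ) (hl : 2 * l ≤ n) :
    ∑ x ∈ piAntidiag (univ : Finset (Fin (n+1))) n, (#{i | x i = l} : ℝ)^2
      = (n+1) * n.multichoose (n - l) + (n+1) * n * (n-1).multichoose (n - 2 * l) := by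
  have : ∀ x : Fin (n+1) → ℕ, (#{i | x i = l} : ℝ)^2 =
      ∑ i, ∑ j, if x i = l ∧ x j = l then 1 else 0 := by
    intro x
    have : (#{i | x i = l} : ℝ) = ∑ i, if x i = l then 1 else 0 := by simp
    rw [this, sq, Finset.sum_mul_sum]
    apply Finset.sum_congr rfl; intro i _
    apply Finset.sum_congr rfl; intro j _
    split_ifs <;> simp_all
  simp only [this]
  rw [Finset.sum_comm]
  have h2 : ∀ i : Fin (n+1), ∑ x ∈ piAntidiag (univ : Finset (Fin (n+1))) n,
      ∑ j, (if x i = l ∧ x j = l then (1:ℝ) else 0) =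
        n.multichoose (n - l) + n * (n-1).multichoose (n - 2 * l) := by
    intro i
    rw [Finset.sum_comm, ← Finset.add_sum_erase _ _ (mem_univ i)]
    simp only [Finset.sum_boole, and_self, count1 l (show l ≤ n by omega)]
    congr 1
    rw [Finset.sum_congr rfl (fun j hj => by
      rw [count2 l hl i j (mem_erase.1 hj).1.symm])]
    simp
  rw [Finset.sum_congr rfl (fun i _ => h2 i)]
  simp; ring

lemma var_eq (l : ℕ) (hl : 1 ≤ l) (h : 2 * l ≤ n) :
    varBlocksOfSize l n =
      ((n+1) * n.multichoose (n - l) + (n+1) * n * (n-1).multichoose (n - 2 * l)) /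
        ((n+1).multichoose n : ℝ) -
      ((n+1) * n.multichoose (n - l) / ((n+1).multichoose n : ℝ))^2 := by
  have hn1 : (n + 1 : ℝ) ≠ 0 := by positivity
  have c0 : ((n+1).multichoose n : ℝ) = (n+1) * Fintype.card (NCPart n) := by
    have e1 := sum_NC (n := n) l hl (fun _ => 1)
    have e2 := sum_good (n := n) (fun _ => 1) (fun _ _ => rfl)
    simp only [sum_const, card_PA, card_univ, Fintype.card_fin, nsmul_eq_mul, mul_one] at e1 e2
    rw [e2, e1]
  have c1 := sum_NC (n := n) l hl (fun k => (k : ℝ))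
  have c2 := sum_NC (n := n) l hl (fun k => (k : ℝ)^2)
  have d1 := sum_good (n := n) (fun x => (#{i | x i = l} : ℝ)) (fun r x => by rw [card_rot])
  have d2 := sum_good (n := n) (fun x => (#{i | x i = l} : ℝ)^2) (fun r x => by rw [card_rot])
  unfold varBlocksOfSize
  rw [← sumXX l h, ← sumX l (by omega), d1, d2, ← c1, ← c2, c0,
    mul_div_mul_left _ _ hn1, mul_div_mul_left _ _ hn1]

end cyc

section asym
open Filter Asymptotics

/-- `f n = c + d / n + O(1/n^2)` -/
def Expn (f : ℕ → ℝ) (c d : ℝ) : Prop :=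
  (fun n : ℕ => f n - c - d / n) =O[atTop] (fun n : ℕ => 1 / (n : ℝ)^2)

lemma inv_bigO : (fun n : ℕ => 1 / (n:ℝ)) =O[atTop] (fun _ => (1:ℝ)) := by
  apply IsBigO.of_bound 1
  filter_upwards [eventually_ge_atTop 1] with n hn
  have : (1:ℝ) ≤ n := by exact_mod_cast hn
  rw [Real.norm_of_nonneg (by positivity)]
  simp only [norm_one, mul_one]
  rw [div_le_one (by positivity)]; exact this

lemma inv2_bigO : (fun n : ℕ => 1 / (n:ℝ)^2) =O[atTop] (fun _ => (1:ℝ)) := by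
  have := inv_bigO.mul inv_bigO
  refine (this.congr (fun n => ?_) (fun n => ?_))
  · rw [div_mul_div_comm, sq, one_mul]
  · ring

lemma lin_bigO (c d : ℝ) : (fun n : ℕ => c + d / (n:ℝ)) =O[atTop] (fun _ => (1:ℝ)) := by
  have h1 : (fun n : ℕ => d / (n:ℝ)) =O[atTop] (fun _ => (1:ℝ)) := by
    refine (inv_bigO.const_mul_left d).congr_left (fun n => by ring)
  exact (isBigO_const_const c one_ne_zero atTop).add h1

lemma Expn.bigO {f : ℕ → ℝ} {c d : ℝ} (h : Expn f c d) : f =O[atTop] (fun _ => (1:ℝ)) := by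
  refine ((h.trans inv2_bigO).add (lin_bigO c d)).congr_left (fun n => by ring)

lemma Expn.mul {f g : ℕ → ℝ} {c d c' d' : ℝ} (hf : Expn f c d) (hg : Expn g c' d') :
    Expn (fun n => f n * g n) (c * c') (c * d' + d * c') := by
  have h1 := IsBigO.mul hf hg.bigO
  have h2 := (lin_bigO c d).mul hg
  have h3 := (isBigO_refl (fun n : ℕ => 1 / (n : ℝ)^2) atTop).const_mul_left (d * d')
  simp only [mul_one] at h1
  simp only [one_mul] at h2
  refine ((h1.add h2).add h3).congr_left (fun n => ?_)
  by_cases hn : (n:ℝ) = 0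
  · simp [hn]; ring
  · field_simp; ring

lemma Expn.congr {f g : ℕ → ℝ} {c d c' d' : ℝ} (hf : Expn f c d) (h : ∀ᶠ n in atTop, f n = g n)
    (hc : c = c') (hd : d = d') : Expn g c' d' := by
  subst hc hd
  refine IsBigO.congr' hf ?_ EventuallyEq.rfl
  filter_upwards [h] with n hn
  rw [hn]

lemma Expn.const (c : ℝ) : Expn (fun _ => c) c 0 := by
  simpa [Expn] using isBigO_zero _ _

lemma Expn.ratio (a b : ℝ) :
    Expn (fun n : ℕ => ((n:ℝ) - a) / (2 * n - b)) (1/2) ((b - 2 * a)/4) := by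
  apply IsBigO.of_bound |(b - 2*a)/4 * b|
  obtain ⟨N, hN⟩ := exists_nat_ge (|b| + 1)
  filter_upwards [eventually_ge_atTop N] with n hn
  have hn' : |b| + 1 ≤ n := hN.trans (by exact_mod_cast hn)
  have hb := abs_nonneg b
  have hb2 := le_abs_self b
  have hpos : (0:ℝ) < n := by linarith
  have hpos2 : (n:ℝ) ≤ 2 * n - b := by linarith
  have hpos3 : (0:ℝ) < 2 * n - b := by linarith
  have e : ((n:ℝ) - a) / (2 * n - b) - 1/2 - (b - 2 * a)/4 / n
      = ((b - 2*a)/4 * b) * (1 / (n * (2 * n - b))) := by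
    have hne := hpos3.ne'
    rw [div_div, div_sub_div _ _ hne two_ne_zero, div_sub_div _ _ (by positivity) (by positivity),
      mul_one_div, div_eq_div_iff (by positivity) (by positivity)]
    ring
  rw [e, Real.norm_eq_abs, Real.norm_eq_abs, abs_mul]
  apply mul_le_mul_of_nonneg_left _ (abs_nonneg _)
  rw [abs_of_pos (by positivity), abs_of_pos (by positivity)]
  apply one_div_le_one_div_of_le (by positivity)
  nlinarith

lemma mc_right (a b : ℕ) (ha : 1 ≤ a) :
    ((b:ℝ) + 1) * a.multichoose (b+1) = (a + b) * a.multichoose b := by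
  obtain ⟨a, rfl⟩ := Nat.exists_eq_add_of_le' ha
  rw [Nat.multichoose_eq, Nat.multichoose_eq]
  have := Nat.add_one_mul_choose_eq (a+b) b
  rw [show a + 1 + (b + 1) - 1 = a + b + 1 by omega, show a + 1 + b - 1 = a + b by omega]
  have h2 : ((a + b + 1 : ℕ) : ℝ) * (a+b).choose b = (a+b+1).choose (b+1) * ((b+1 : ℕ) : ℝ) := by
    exact_mod_cast this
  push_cast at h2 ⊢
  linarith

lemma mc_left (a b : ℕ) (ha : 1 ≤ a) :
    (a:ℝ) * (a+1).multichoose b = (a + b) * a.multichoose b := by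
  obtain ⟨a, rfl⟩ := Nat.exists_eq_add_of_le' ha
  rw [Nat.multichoose_eq, Nat.multichoose_eq]
  have := Nat.choose_mul_succ_eq (a+b) b
  rw [show a + 1 + 1 + b - 1 = a + b + 1 by omega, show a + 1 + b - 1 = a + b by omega]
  rw [show a + b + 1 - b = a + 1 by omega] at this
  have h2 : ((a+b).choose b : ℝ) * ((a + b + 1 : ℕ) : ℝ)  = (a+b+1).choose b * ((a+1 : ℕ) : ℝ) := by
    exact_mod_cast this
  push_cast at h2 ⊢
  linarith

lemma mc_pos (n : ℕ) : (0:ℝ) < (n+1).multichoose n := by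
  rw [Nat.multichoose_eq]
  exact_mod_cast Nat.choose_pos (by omega)

lemma expn_p (l : ℕ) :
    Expn (fun n => (n.multichoose (n - l) : ℝ) / ((n+1).multichoose n : ℝ)) ((1/2)^(l+1))
      ((1/2)^(l+1) * (l * (3 - l) / 4)) := by
  induction l with
  | zero =>
    refine (Expn.const (1/2)).congr ?_ (by norm_num) (by norm_num)
    filter_upwards [eventually_ge_atTop 1] with n hn
    have h := mc_left n n hn
    have h0 := mc_pos n
    have hn' : (0:ℝ) < n := by exact_mod_cast hn
    rw [Nat.sub_zero, eq_div_iff h0.ne']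
    have : (n:ℝ) * ((n+1).multichoose n - 2 * n.multichoose n) = 0 := by linarith
    rcases mul_eq_zero.1 this with h | h <;> linarith
  | succ l ih =>
    refine (ih.mul (Expn.ratio l (l+1))).congr ?_ (by ring) (by push_cast; ring)
    filter_upwards [eventually_ge_atTop (l+1)] with n hn
    have h := mc_right n (n - (l+1)) (by omega)
    rw [show n - (l+1) + 1 = n - l by omega, Nat.cast_sub hn] at h
    have hn' : (l + 1 : ℝ) ≤ n := by exact_mod_cast hn
    have hp : (0:ℝ) < 2 * n - (l+1) := by
      have : (0:ℝ) ≤ l := by positivity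
      linarith
    have h0 := mc_pos n
    push_cast at h
    rw [div_mul_div_comm, div_eq_div_iff (by positivity) (by positivity)]
    linear_combination ((n+1).multichoose n : ℝ) * h

lemma expn_q (m : ℕ) :
    Expn (fun n => ((n-1).multichoose (n - m) : ℝ) / ((n+1).multichoose n : ℝ)) ((1/2)^(m+2))
      ((1/2)^(m+2) * (- 1/2 + m - m * (m - 1) / 4)) := by
  induction m with
  | zero =>
    refine ((expn_p 0).mul (Expn.ratio 1 1)).congr ?_ (by norm_num) (by norm_num)
    filter_upwards [eventually_ge_atTop 2] with n hn
    have h := mc_left (n-1) n (by omega)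
    rw [Nat.sub_add_cancel (by omega), Nat.cast_sub (by omega)] at h
    have h0 := mc_pos n
    have hn' : (2:ℝ) ≤ n := by exact_mod_cast hn
    have hp : (0:ℝ) < 2 * n - 1 := by linarith
    rw [Nat.sub_zero, div_mul_div_comm, div_eq_div_iff (by positivity) (by positivity)]
    push_cast at h
    linear_combination ((n+1).multichoose n : ℝ) * h
  | succ m ih =>
    refine (ih.mul (Expn.ratio m (m+2))).congr ?_ (by ring) (by push_cast; ring)
    filter_upwards [eventually_ge_atTop (m+2)] with n hn
    have h := mc_right (n-1) (n - (m+1)) (by omega)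
    rw [show n - (m+1) + 1 = n - m by omega, Nat.cast_sub (show m+1 ≤ n by omega),
      Nat.cast_sub (show 1 ≤ n by omega)] at h
    have hn' : (m + 2 : ℝ) ≤ n := by exact_mod_cast hn
    have hp : (0:ℝ) < 2 * n - (m+2) := by
      have : (0:ℝ) ≤ m := by positivity
      linarith
    have h0 := mc_pos n
    push_cast at h
    rw [div_mul_div_comm, div_eq_div_iff (by positivity) (by positivity)]
    linear_combination ((n+1).multichoose n : ℝ) * h

lemma weight_bigO (w ρ : ℕ → ℝ) (hw : ∀ n : ℕ, 1 ≤ n → |w n| ≤ 4 * (n:ℝ)^2)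
    (hρ : ρ =O[atTop] (fun n : ℕ => 1 / (n : ℝ)^2)) :
    (fun n => w n * ρ n) =O[atTop] (fun _ => (1:ℝ)) := by
  have h1 : w =O[atTop] (fun n : ℕ => (n:ℝ)^2) := by
    apply IsBigO.of_bound 4
    filter_upwards [eventually_ge_atTop 1] with n hn
    simpa using hw n hn
  refine (h1.mul hρ).trans (IsBigO.of_bound 1 ?_)
  filter_upwards [eventually_ge_atTop 1] with n hn
  have : (n:ℝ) ≠ 0 := by positivity
  simp [this]

lemma var_bigO (p q : ℕ → ℝ) (c A B : ℝ) (hp : Expn p c (c * A)) (hq : Expn q (c^2) (c^2 * B)) :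
    (fun n : ℕ => ((n+1) * p n + (n+1) * n * q n - ((n+1) * p n)^2)
      - n * (c + c^2 * (B - 1 - 2 * A))) =O[atTop] (fun _ => (1:ℝ)) := by
  have hpp := hp.mul hp
  have cast1 : ∀ n : ℕ, 1 ≤ n → (1:ℝ) ≤ n := fun n hn => by exact_mod_cast hn
  have w3 := weight_bigO (fun n => (n:ℝ)+1) _ (fun n hn => by
    have := cast1 n hn
    rw [abs_of_nonneg (by positivity)]; nlinarith) hp
  have w1 := weight_bigO (fun n => ((n:ℝ)+1) * n) _ (fun n hn => by
    have := cast1 n hn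
    rw [abs_of_nonneg (by positivity)]; nlinarith) hq
  have w2 := weight_bigO (fun n => ((n:ℝ)+1)^2) _ (fun n hn => by
    have := cast1 n hn
    rw [abs_of_nonneg (by positivity)]; nlinarith) hpp
  have h := ((w3.add w1).sub w2).add
    (lin_bigO (c + c * A + c^2 * B - c^2 - 4 * c^2 * A) (c * A - 2 * c^2 * A))
  refine h.congr' ?_ EventuallyEq.rfl
  filter_upwards [eventually_ge_atTop 1] with n hn
  have : (n:ℝ) ≠ 0 := by positivity
  field_simp
  ring

end asym

/-- For fixed `l ≥ 1`,
`Var(X_n^{(l)}) = (n/2^{2l+3})·(2^{l+2} − (l − 1)² − 2) + O(1)`: there is a constant `K`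
(possibly depending on `l`) such that the difference is at most `K` for all `n ≥ 1`. -/
theorem varBlocksOfSize_asymptotic (l : ℕ) (hl : 1 ≤ l) :
    ∃ K : ℝ, ∀ n : ℕ, 1 ≤ n →
      |varBlocksOfSize l n -
        ((n : ℝ) / 2 ^ (2 * l + 3)) * (2 ^ (l + 2) - ((l : ℝ) - 1) ^ 2 - 2)| ≤ K := by
  have h := var_bigO _ _ _ _ (- 1/2 + ((2 * l : ℕ) : ℝ) - ((2 * l : ℕ) : ℝ) * (((2 * l : ℕ) : ℝ) - 1) / 4)
    (expn_p l) ((expn_q (2 * l)).congr (Filter.Eventually.of_forall fun _ => rfl) (by ring) (by ring))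
  have h2 : (fun n : ℕ => varBlocksOfSize l n -
        ((n : ℝ) / 2 ^ (2 * l + 3)) * (2 ^ (l + 2) - ((l : ℝ) - 1) ^ 2 - 2))
        =O[Filter.atTop] (fun _ => (1:ℝ)) := by
    refine h.congr' ?_ Filter.EventuallyEq.rfl
    filter_upwards [Filter.eventually_ge_atTop (2 * l)] with n hn
    rw [var_eq l hl hn]
    congr 1
    · ring
    · have e1 : ((1:ℝ)/2)^(l+1) = 1 / (2 * 2^l) := by rw [div_pow, one_pow, pow_succ]; ring
      have e2 : (2:ℝ)^(2*l+3) = 8 * (2^l)^2 := by ring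
      have e3 : (2:ℝ)^(l+2) = 4 * 2^l := by ring
      have e4 : (2:ℝ)^l ≠ 0 := by positivity
      rw [e1, e2, e3]
      push_cast
      field_simp
      ring
  obtain ⟨K, hK⟩ := Asymptotics.isBigO_one_nat_atTop_iff.1 h2
  exact ⟨K, fun n _ => hK n⟩
end

section
/- Fix integers k, l ≥ 1 with k ≠ l. Let Cov(X_n^{(k)}, X_n^{(l)}) = (1/C_n)·Σ_{π ∈ NC(n)} k_k(π)·k_l(π) − ((1/C_n)·Σ_{π} k_k(π))·((1/C_n)·Σ_{π} k_l(π)) be the covariance of the numbers of blocks of sizes k and l in a uniformly random non-crossing partition of [n]. Then Cov(X_n^{(k)}, X_n^{(l)}) = −(n/2^{k+l+3})·(2 + (k − 1)(l − 1)) + O(1); that is, there exists a constant K (possibly depending on k and l) such that |Cov(X_n^{(k)}, X_n^{(l)}) + (n/2^{k+l+3})·(2 + (k − 1)(l − 1))| ≤ K for all n ≥ 1. In particular, the numbers of blocks of different sizes are negatively correlated for all large n. -/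
open Filter

/-- The covariance of the numbers of blocks of sizes `k` and `l` of a uniformly random
non-crossing partition of `[n]`. -/
noncomputable def covBlocksOfSize (k l n : ℕ) : ℝ :=
  (∑ π : NCPart n, (numBlocksOfSize k π : ℝ) * (numBlocksOfSize l π : ℝ)) /
      (Fintype.card (NCPart n) : ℝ) -
    ((∑ π : NCPart n, (numBlocksOfSize k π : ℝ)) / (Fintype.card (NCPart n) : ℝ)) *
      ((∑ π : NCPart n, (numBlocksOfSize l π : ℝ)) / (Fintype.card (NCPart n) : ℝ))


namespace NCAux
open Finset

/-- Relabelling that leaves a gap of length `j` at position `p`. -/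
def shift (p j : ℕ) : ℕ ↪ ℕ :=
  ⟨fun x => if x < p then x else x + j, by intro x y h; simp only at h; split_ifs at h <;> omega⟩

lemma shift_apply (p j x : ℕ) : shift p j x = if x < p then x else x + j := rfl

lemma shift_lt {p j x y : ℕ} : shift p j x < shift p j y ↔ x < y := by
  simp only [shift_apply]; split_ifs <;> omega

lemma shift_surj {p j y : ℕ} (h : y ∉ Ico p (p + j)) : ∃ x, shift p j x = y := by
  simp only [mem_Ico, not_and, not_lt] at h
  by_cases hy : y < p
  · exact ⟨y, by simp [shift_apply, hy]⟩
  · have := h (by omega)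
    exact ⟨y - j, by simp only [shift_apply]; split_ifs <;> omega⟩

lemma shift_not_mem (p j x : ℕ) : shift p j x ∉ Ico p (p + j) := by
  simp only [shift_apply, mem_Ico]; split_ifs <;> omega

/-- Non-crossing partitions of `{0, …, n-1}` as families of finite sets of naturals. -/
structure IsNC (n : ℕ) (S : Finset (Finset ℕ)) : Prop where
  ne : ∀ B ∈ S, B.Nonempty
  sub : ∀ B ∈ S, ∀ x ∈ B, x < n
  cov : ∀ x < n, ∃ B ∈ S, x ∈ B
  uniq : ∀ B ∈ S, ∀ B' ∈ S, ∀ x, x ∈ B → x ∈ B' → B = B'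
  nc : ∀ a b c d, a < b → b < c → c < d → ∀ B ∈ S, ∀ B' ∈ S,
    a ∈ B → c ∈ B → b ∈ B' → d ∈ B' → B = B'

open Classical in
/-- Non-crossing partitions of `{0, …, n-1}` all of whose blocks start before `p`. -/
noncomputable def fam (n p : ℕ) : Finset (Finset (Finset ℕ)) :=
  (range n).powerset.powerset.filter (fun S => IsNC n S ∧ ∀ B ∈ S, ∃ x ∈ B, x < p)

lemma mem_fam {n p : ℕ} {S : Finset (Finset ℕ)} :
    S ∈ fam n p ↔ IsNC n S ∧ ∀ B ∈ S, ∃ x ∈ B, x < p := by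
  simp only [fam, mem_filter, mem_powerset, and_iff_right_iff_imp]
  rintro ⟨h, -⟩ B hB
  rw [mem_powerset]
  intro x hx
  exact mem_range.2 (h.sub B hB x hx)

/-- Insert an interval block. -/
def ins (p j : ℕ) (S : Finset (Finset ℕ)) : Finset (Finset ℕ) :=
  insert (Ico p (p + j)) (S.image (fun B => B.map (shift p j)))

lemma map_inj' (p j : ℕ) : Function.Injective (fun B : Finset ℕ => B.map (shift p j)) :=
  Finset.map_injective _

lemma Ico_not_mem {p j : ℕ} (hj : 1 ≤ j) (S : Finset (Finset ℕ)) :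
    Ico p (p + j) ∉ S.image (fun B => B.map (shift p j)) := by
  simp only [mem_image, not_exists, not_and]
  intro B _ h
  have hp : p ∈ Ico p (p + j) := by simp; omega
  have hp' := hp
  rw [← h, Finset.mem_map] at hp'
  obtain ⟨x, _, hx⟩ := hp'
  have := shift_not_mem p j x
  rw [hx] at this
  exact this hp

lemma ins_injective {p j : ℕ} (hj : 1 ≤ j) : Function.Injective (ins p j) := by
  intro S S' h
  have := congrArg (fun F => F.erase (Ico p (p + j))) h
  simp only [ins, erase_insert (Ico_not_mem hj _)] at this
  exact Finset.image_injective (map_inj' p j) this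

lemma prod_ins {R : Type*} [CommRing R] (t : ℕ → R) {p j : ℕ} (hj : 1 ≤ j)
    (S : Finset (Finset ℕ)) :
    ∏ B ∈ ins p j S, t B.card = t j * ∏ B ∈ S, t B.card := by
  rw [ins, prod_insert (Ico_not_mem hj _), prod_image (fun _ _ _ _ h => map_inj' p j h)]
  simp

lemma ins_isNC {n p j : ℕ} (hj : 1 ≤ j) (hp : p ≤ n) {S : Finset (Finset ℕ)} (h : IsNC n S) :
    IsNC (n + j) (ins p j S) := by
  have key : ∀ C ∈ ins p j S, C = Ico p (p + j) ∨ ∃ B ∈ S, B.map (shift p j) = C := by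
    intro C hC
    simpa [ins] using hC
  have hdis : ∀ x (B : Finset ℕ), x ∈ Ico p (p + j) → x ∉ B.map (shift p j) := by
    intro x B hx hx'
    obtain ⟨y, _, rfl⟩ := Finset.mem_map.1 hx'
    exact shift_not_mem p j y hx
  refine ⟨?_, ?_, ?_, ?_, ?_⟩
  · intro C hC
    rcases key C hC with rfl | ⟨B, hB, rfl⟩
    · exact ⟨p, by simp; omega⟩
    · simpa using h.ne B hB
  · intro C hC x hx
    rcases key C hC with rfl | ⟨B, hB, rfl⟩
    · simp at hx; omega
    · obtain ⟨y, hy, rfl⟩ := Finset.mem_map.1 hx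
      have := h.sub B hB y hy
      simp only [shift_apply]; split_ifs <;> omega
  · intro x hx
    by_cases hI : x ∈ Ico p (p + j)
    · exact ⟨_, mem_insert_self _ _, hI⟩
    · obtain ⟨y, rfl⟩ := shift_surj hI
      have hy : y < n := by
        simp only [shift_apply] at hx; split_ifs at hx <;> omega
      obtain ⟨B, hB, hyB⟩ := h.cov y hy
      exact ⟨B.map (shift p j), mem_insert_of_mem (mem_image_of_mem _ hB),
        mem_map_of_mem _ hyB⟩
  · intro C hC C' hC' x hx hx'
    rcases key C hC with rfl | ⟨B, hB, rfl⟩ <;> rcases key C' hC' with rfl | ⟨B', hB', rfl⟩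
    · rfl
    · exact absurd hx' (hdis _ _ hx)
    · exact absurd hx (hdis _ _ hx')
    · obtain ⟨y, hy, rfl⟩ := Finset.mem_map.1 hx
      rw [Finset.mem_map'] at hx'
      rw [h.uniq B hB B' hB' y hy hx']
  · intro a b c d hab hbc hcd C hC C' hC' ha hc hb hd
    rcases key C hC with rfl | ⟨B, hB, rfl⟩ <;> rcases key C' hC' with rfl | ⟨B', hB', rfl⟩
    · rfl
    · have : b ∈ Ico p (p + j) := by simp at ha hc ⊢; omega
      exact absurd hb (hdis _ _ this)
    · have : c ∈ Ico p (p + j) := by simp at hb hd ⊢; omega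
      exact absurd hc (hdis _ _ this)
    · obtain ⟨a', ha', rfl⟩ := Finset.mem_map.1 ha
      obtain ⟨b', hb', rfl⟩ := Finset.mem_map.1 hb
      obtain ⟨c', hc', rfl⟩ := Finset.mem_map.1 hc
      obtain ⟨d', hd', rfl⟩ := Finset.mem_map.1 hd
      rw [shift_lt] at hab hbc hcd
      rw [h.nc a' b' c' d' hab hbc hcd B hB B' hB' ha' hc' hb' hd']

lemma ins_surj {n p j : ℕ} {S : Finset (Finset ℕ)} (hj : 1 ≤ j)
    (h : IsNC (n + j) S) (hm : ∀ B ∈ S, ∃ x ∈ B, x < p + 1) (hI : Ico p (p + j) ∈ S)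
    (hpn : p ≤ n) :
    ∃ S' ∈ fam n p, ins p j S' = S := by
  have hinv : ∀ C ∈ S, C ≠ Ico p (p + j) → ∃ B : Finset ℕ, B.map (shift p j) = C := by
    intro C hC hne
    refine ⟨C.preimage (shift p j) (shift p j).injective.injOn, ?_⟩
    ext x
    simp only [Finset.mem_map, mem_preimage]
    constructor
    · rintro ⟨y, hy, rfl⟩; exact hy
    · intro hx
      obtain ⟨y, rfl⟩ := shift_surj (p := p) (j := j) (y := x)
        (fun hx' => hne (h.uniq C hC _ hI x hx hx'))
      exact ⟨y, hx, rfl⟩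
  have hsub : ∀ B : Finset ℕ, B.map (shift p j) ∈ S → ∀ x ∈ B, x < n := by
    intro B hB x hx
    have := h.sub _ hB _ (mem_map_of_mem _ hx)
    simp only [shift_apply] at this; split_ifs at this <;> omega
  have hne : ∀ B : Finset ℕ, B.map (shift p j) ≠ Ico p (p + j) := by
    intro B hB
    have := Ico_not_mem (p := p) hj {B}
    simp [hB] at this
  let S' := (range n).powerset.filter (fun B => B.map (shift p j) ∈ S)
  have hS' : ∀ B, B ∈ S' ↔ B.map (shift p j) ∈ S := by
    intro B
    simp only [S', mem_filter, mem_powerset, and_iff_right_iff_imp]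
    intro hB x hx
    exact mem_range.2 (hsub B hB x hx)
  refine ⟨S', mem_fam.2 ⟨⟨?_, ?_, ?_, ?_, ?_⟩, ?_⟩, ?_⟩
  · intro B hB
    simpa using h.ne _ ((hS' B).1 hB)
  · intro B hB
    exact hsub B ((hS' B).1 hB)
  · intro x hx
    obtain ⟨C, hC, hxC⟩ := h.cov (shift p j x) (by
      simp only [shift_apply]; split_ifs <;> omega)
    obtain ⟨B, rfl⟩ := hinv C hC (by rintro rfl; exact shift_not_mem p j x hxC)
    exact ⟨B, (hS' B).2 hC, by simpa using hxC⟩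
  · intro B hB B' hB' x hx hx'
    exact map_inj' p j (h.uniq _ ((hS' B).1 hB) _ ((hS' B').1 hB') (shift p j x)
      (mem_map_of_mem _ hx) (mem_map_of_mem _ hx'))
  · intro a b c d hab hbc hcd B hB B' hB' ha hc hb hd
    exact map_inj' p j (h.nc _ _ _ _ (shift_lt.2 hab) (shift_lt.2 hbc) (shift_lt.2 hcd)
      _ ((hS' B).1 hB) _ ((hS' B').1 hB')
      (mem_map_of_mem _ ha) (mem_map_of_mem _ hc) (mem_map_of_mem _ hb) (mem_map_of_mem _ hd))
  · intro B hB
    obtain ⟨y, hy, hyp⟩ := hm _ ((hS' B).1 hB)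
    obtain ⟨x, hx, rfl⟩ := Finset.mem_map.1 hy
    refine ⟨x, hx, ?_⟩
    simp only [shift_apply] at hyp; split_ifs at hyp <;> omega
  · ext C
    simp only [ins, mem_insert, mem_image]
    constructor
    · rintro (rfl | ⟨B, hB, rfl⟩)
      · exact hI
      · exact (hS' B).1 hB
    · intro hC
      by_cases hCI : C = Ico p (p + j)
      · exact Or.inl hCI
      · obtain ⟨B, rfl⟩ := hinv C hC hCI
        exact Or.inr ⟨B, (hS' B).2 hC, rfl⟩

/-- The last-starting block is an interval. -/
lemma last_interval {n p : ℕ} {S : Finset (Finset ℕ)} (h : IsNC n S)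
    (hm : ∀ B ∈ S, ∃ x ∈ B, x < p + 1) {B : Finset ℕ} (hB : B ∈ S)
    (hBp : ¬ ∃ x ∈ B, x < p) : B = Ico p (p + B.card) ∧ 1 ≤ B.card ∧ p + B.card ≤ n := by
  push Not at hBp
  obtain ⟨y, hy, hyp⟩ := hm B hB
  have := hBp y hy
  obtain rfl : y = p := by omega
  have hconv : ∀ z ∈ B, ∀ x, y ≤ x → x ≤ z → x ∈ B := by
    intro z hz x hx hxz
    by_contra hxB
    obtain ⟨B', hB', hxB'⟩ := h.cov x (lt_of_le_of_lt hxz (h.sub B hB z hz))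
    obtain ⟨w, hw, hwy⟩ := hm B' hB'
    have hne : B' ≠ B := by rintro rfl; exact hxB hxB'
    have h1 : w ≠ y := by rintro rfl; exact hne (h.uniq _ hB' _ hB w hw hy)
    have h2 : x ≠ y := by rintro rfl; exact hxB hy
    have h3 : x ≠ z := by rintro rfl; exact hxB hz
    exact hne (h.nc w y x z (by omega) (by omega) (by omega) B' hB' B hB hw hxB' hy hz)
  have hBI : B = Ico y (B.max' ⟨y, hy⟩ + 1) := by
    ext x
    simp only [mem_Ico]
    constructor
    · intro hx
      exact ⟨hBp x hx, Nat.lt_succ_of_le (B.le_max' x hx)⟩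
    · rintro ⟨h1, h2⟩
      exact hconv _ (B.max'_mem ⟨y, hy⟩) x h1 (by omega)
  have hle := B.le_max' y hy
  have hlt := h.sub B hB _ (B.max'_mem ⟨y, hy⟩)
  have hc : B.card = B.max' ⟨y, hy⟩ + 1 - y := by
    conv_lhs => rw [hBI]
    simp
  refine ⟨?_, by omega, by omega⟩
  conv_lhs => rw [hBI]
  congr 1
  omega

section rec
variable {R : Type*} [CommRing R] (t : ℕ → R)

/-- Weighted count. -/
noncomputable def A (n p : ℕ) : R := ∑ S ∈ fam n p, ∏ B ∈ S, t B.card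

lemma fam_succ {n p : ℕ} : fam n (p + 1) = fam n p ∪
    (Icc 1 (n - p)).biUnion (fun j => (fam (n - j) p).image (ins p j)) := by
  ext S
  simp only [mem_union, mem_biUnion, mem_image, mem_Icc]
  constructor
  · intro hS
    obtain ⟨h, hm⟩ := mem_fam.1 hS
    by_cases hp : ∀ B ∈ S, ∃ x ∈ B, x < p
    · exact Or.inl (mem_fam.2 ⟨h, hp⟩)
    · right
      push Not at hp
      obtain ⟨B, hB, hBp⟩ := hp
      obtain ⟨h1, h2, h3⟩ := last_interval h hm hB (by push Not; exact hBp)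
      refine ⟨B.card, ⟨h2, by omega⟩, ?_⟩
      apply ins_surj h2 _ hm (h1 ▸ hB) (by omega)
      rwa [Nat.sub_add_cancel (by omega)]
  · rintro (hS | ⟨j, ⟨hj1, hj2⟩, S', hS', rfl⟩)
    · obtain ⟨h, hm⟩ := mem_fam.1 hS
      refine mem_fam.2 ⟨h, fun B hB => ?_⟩
      obtain ⟨x, hx, hxp⟩ := hm B hB
      exact ⟨x, hx, by omega⟩
    · obtain ⟨h, hm⟩ := mem_fam.1 hS'
      refine mem_fam.2 ⟨?_, fun C hC => ?_⟩
      · have := ins_isNC (n := n - j) (p := p) hj1 (by omega) h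
        rwa [Nat.sub_add_cancel (by omega)] at this
      · simp only [ins, mem_insert, mem_image] at hC
        rcases hC with rfl | ⟨B, hB, rfl⟩
        · exact ⟨p, by simp; omega, by omega⟩
        · obtain ⟨x, hx, hxp⟩ := hm B hB
          exact ⟨shift p j x, mem_map_of_mem _ hx, by simp [shift_apply, hxp]; omega⟩

lemma mem_ins_unique {n p i j : ℕ} {S S' : Finset (Finset ℕ)}
    (hi : 1 ≤ i) (hj : 1 ≤ j) (hpn : p ≤ n)
    (hS : IsNC n S)
    (h : ins p i S = ins p j S') : i = j := by
  have h1 := ins_isNC hi hpn hS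
  have hI : Ico p (p + i) ∈ ins p i S := mem_insert_self _ _
  have hJ : Ico p (p + j) ∈ ins p i S := h ▸ mem_insert_self _ _
  have := h1.uniq _ hI _ hJ p (by simp; omega) (by simp; omega)
  have := congrArg Finset.card this
  simpa using this

lemma A_succ (n p : ℕ) :
    A t n (p + 1) = A t n p + ∑ j ∈ Icc 1 (n - p), t j * A t (n - j) p := by
  rw [A, fam_succ, sum_union, sum_biUnion]
  · congr 1
    apply sum_congr rfl
    intro j hj
    have hj1 := (mem_Icc.1 hj).1
    rw [sum_image (fun _ _ _ _ h => ins_injective hj1 h), A, mul_sum]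
    exact sum_congr rfl fun S _ => prod_ins t hj1 S
  · intro i hi j hj hij
    have hi := mem_Icc.1 hi
    have hj := mem_Icc.1 hj
    rw [Function.onFun, disjoint_left]
    intro S hS hS'
    obtain ⟨U, hU, rfl⟩ := mem_image.1 hS
    obtain ⟨V, hV, hUV⟩ := mem_image.1 hS'
    exact hij (mem_ins_unique hi.1 hj.1 (by omega) (mem_fam.1 hU).1 hUV.symm)
  · rw [disjoint_left]
    intro S hS hS'
    obtain ⟨j, hj, hS'⟩ := mem_biUnion.1 hS'
    obtain ⟨U, hU, rfl⟩ := mem_image.1 hS'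
    obtain ⟨x, hx, hxp⟩ := (mem_fam.1 hS).2 (Ico p (p + j)) (mem_insert_self _ _)
    simp at hx
    omega

lemma A_zero (n : ℕ) : A t n 0 = if n = 0 then 1 else 0 := by
  split_ifs with hn
  · subst hn
    have : fam 0 0 = {∅} := by
      ext S
      rw [mem_fam, mem_singleton]
      constructor
      · rintro ⟨_, h⟩
        apply eq_empty_of_forall_notMem
        intro B hB
        obtain ⟨x, _, hx⟩ := h B hB
        omega
      · rintro rfl
        exact ⟨⟨by simp, by simp, by simp, by simp, by simp⟩, by simp⟩
    simp [A, this]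
  · have : fam n 0 = ∅ := by
      apply eq_empty_of_forall_notMem
      intro S hS
      obtain ⟨h, hm⟩ := mem_fam.1 hS
      obtain ⟨B, hB, _⟩ := h.cov 0 (by omega)
      obtain ⟨x, _, hx⟩ := hm B hB
      omega
    simp [A, this]

end rec

section series
open PowerSeries
variable {R : Type*} [CommRing R] (t : ℕ → R)

lemma sum_Icc_one (f : ℕ → R) (m : ℕ) : ∑ j ∈ Icc 1 m, f j = ∑ j ∈ range m, f (j + 1) := by
  induction m with
  | zero => simp
  | succ m ih => rw [sum_Icc_succ_top (by omega), ih, sum_range_succ]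

/-- Generating series of the weighted counts. -/
noncomputable def al (p : ℕ) : PowerSeries R := PowerSeries.mk fun h => A t (p + h) p

lemma al_rec (ht : t 0 = 1) (p : ℕ) :
    PowerSeries.mk t * al t p = X * al t (p + 1) + C (A t p p) := by
  ext d
  cases d with
  | zero => simp [al, ht]
  | succ h =>
    rw [map_add, coeff_succ_X_mul, coeff_C, if_neg (by omega), add_zero, coeff_mul,
      Finset.Nat.sum_antidiagonal_eq_sum_range_succ_mk, al, al]
    simp only [coeff_mk]
    rw [sum_range_succ', A_succ, sum_Icc_one, ht, one_mul, add_comm]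
    congr 1
    · congr 1; omega
    · have : p + 1 + h - p = h + 1 := by omega
      rw [this]
      apply sum_congr rfl
      intro j hj
      have := mem_range.1 hj
      congr 2
      omega

lemma coeff_GD (G : PowerSeries R) (N n : ℕ) :
    ((N : R) + 1) * coeff n (G ^ N * (G - X * d⁄dX R G)) =
      ((N : R) + 1 - n) * coeff n (G ^ (N + 1)) := by
  have h1 : C ((N : R) + 1) * (G ^ N * (G - X * d⁄dX R G)) =
      C ((N : R) + 1) * G ^ (N + 1) - X * d⁄dX R (G ^ (N + 1)) := by
    rw [derivative_pow]
    simp only [map_add, map_natCast, map_one]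
    push_cast
    ring
  rw [← coeff_C_mul, h1, map_sub, coeff_C_mul]
  cases n with
  | zero => simp
  | succ n =>
    rw [coeff_succ_X_mul, coeff_derivative]
    push_cast
    ring


lemma phi_step (hR : ∀ (m : ℕ) (x : R), ((m : R) + 1) * x = 0 → x = 0)
    (ht : t 0 = 1) (p N : ℕ) :
    coeff (N + 1) (al t p * (PowerSeries.mk t ^ (N + 1) *
      (PowerSeries.mk t - X * d⁄dX R (PowerSeries.mk t)))) =
    coeff N (al t (p + 1) * (PowerSeries.mk t ^ N *
      (PowerSeries.mk t - X * d⁄dX R (PowerSeries.mk t)))) := by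
  have h0 : coeff (N + 1) (PowerSeries.mk t ^ N *
      (PowerSeries.mk t - X * d⁄dX R (PowerSeries.mk t))) = 0 := by
    apply hR N
    rw [coeff_GD]
    push_cast
    ring
  have h1 : al t p * (PowerSeries.mk t ^ (N + 1) *
      (PowerSeries.mk t - X * d⁄dX R (PowerSeries.mk t))) =
      (PowerSeries.mk t * al t p) * (PowerSeries.mk t ^ N *
      (PowerSeries.mk t - X * d⁄dX R (PowerSeries.mk t))) := by ring
  rw [h1, al_rec t ht, add_mul, map_add, coeff_C_mul, h0, mul_zero, add_zero, mul_assoc,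
    coeff_succ_X_mul]

lemma phi_all (hR : ∀ (m : ℕ) (x : R), ((m : R) + 1) * x = 0 → x = 0)
    (ht : t 0 = 1) (p N : ℕ) :
    coeff (N + p) (al t 0 * (PowerSeries.mk t ^ (N + p) *
      (PowerSeries.mk t - X * d⁄dX R (PowerSeries.mk t)))) =
    coeff N (al t p * (PowerSeries.mk t ^ N *
      (PowerSeries.mk t - X * d⁄dX R (PowerSeries.mk t)))) := by
  induction p generalizing N with
  | zero => rfl
  | succ p ih => rw [← phi_step t hR ht, ← ih, show N + 1 + p = N + (p + 1) by omega]

lemma A_formula (hR : ∀ (m : ℕ) (x : R), ((m : R) + 1) * x = 0 → x = 0)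
    (ht : t 0 = 1) (n : ℕ) :
    ((n : R) + 1) * A t n n = coeff n (PowerSeries.mk t ^ (n + 1)) := by
  have h := phi_all t hR ht n 0
  have h0 : al t 0 = 1 := by
    ext d
    simp [al, A_zero, coeff_one]
  have h2 : coeff 0 (al t n * (PowerSeries.mk t ^ 0 *
      (PowerSeries.mk t - X * d⁄dX R (PowerSeries.mk t)))) = A t n n := by
    simp [al, ht]
  rw [h2, h0, one_mul, zero_add] at h
  rw [← h, coeff_GD]
  ring

end series

section bridge
variable {R : Type*} [CommRing R] (t : ℕ → R)

/-- Convert to a family of finite sets of naturals. -/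
def toFam {n : ℕ} (P : NCPart n) : Finset (Finset ℕ) :=
  P.1.parts.image (fun B => B.map Fin.valEmbedding)

lemma toFam_inj {n : ℕ} : Function.Injective (toFam (n := n)) := by
  intro P Q h
  exact Subtype.ext (Finpartition.ext
    (Finset.image_injective (Finset.map_injective Fin.valEmbedding) h))

lemma toFam_mem {n : ℕ} (P : NCPart n) : toFam P ∈ fam n n := by
  have key : ∀ C ∈ toFam P, ∃ B ∈ P.1.parts, B.map Fin.valEmbedding = C := by
    intro C hC
    simpa [toFam] using hC
  have hsub : ∀ C ∈ toFam P, ∀ x ∈ C, x < n := by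
    intro C hC x hx
    obtain ⟨B, hB, rfl⟩ := key C hC
    obtain ⟨y, hy, rfl⟩ := Finset.mem_map.1 hx
    exact y.2
  have hne : ∀ C ∈ toFam P, C.Nonempty := by
    intro C hC
    obtain ⟨B, hB, rfl⟩ := key C hC
    simpa using P.1.nonempty_of_mem_parts hB
  refine mem_fam.2 ⟨⟨hne, hsub, ?_, ?_, ?_⟩, ?_⟩
  · intro x hx
    obtain ⟨B, hB, hxB⟩ := P.1.exists_mem (mem_univ (⟨x, hx⟩ : Fin n))
    exact ⟨_, mem_image_of_mem _ hB, Finset.mem_map.2 ⟨_, hxB, rfl⟩⟩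
  · intro C hC C' hC' x hx hx'
    obtain ⟨B, hB, rfl⟩ := key C hC
    obtain ⟨B', hB', rfl⟩ := key C' hC'
    obtain ⟨y, hy, rfl⟩ := Finset.mem_map.1 hx
    rw [Finset.mem_map'] at hx'
    rw [P.1.eq_of_mem_parts hB hB' hy hx']
  · intro a b c d hab hbc hcd C hC C' hC' ha hc hb hd
    obtain ⟨B, hB, rfl⟩ := key C hC
    obtain ⟨B', hB', rfl⟩ := key C' hC'
    obtain ⟨a', ha', rfl⟩ := Finset.mem_map.1 ha
    obtain ⟨b', hb', rfl⟩ := Finset.mem_map.1 hb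
    obtain ⟨c', hc', rfl⟩ := Finset.mem_map.1 hc
    obtain ⟨d', hd', rfl⟩ := Finset.mem_map.1 hd
    rw [P.2 a' b' c' d' hab hbc hcd B hB B' hB' ha' hc' hb' hd']
  · intro C hC
    obtain ⟨x, hx⟩ := hne C hC
    exact ⟨x, hx, hsub C hC x hx⟩

lemma toFam_surj {n : ℕ} {S : Finset (Finset ℕ)} (hS : S ∈ fam n n) :
    ∃ P : NCPart n, toFam P = S := by
  obtain ⟨h, -⟩ := mem_fam.1 hS
  let parts : Finset (Finset (Fin n)) := univ.filter (fun B => B.map Fin.valEmbedding ∈ S)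
  have hp : ∀ B, B ∈ parts ↔ B.map Fin.valEmbedding ∈ S := by simp [parts]
  have hinv : ∀ C ∈ S, ∃ B : Finset (Fin n), B.map Fin.valEmbedding = C := by
    intro C hC
    refine ⟨univ.filter (fun x : Fin n => (x : ℕ) ∈ C), ?_⟩
    ext x
    simp only [Finset.mem_map, mem_filter, mem_univ, true_and]
    constructor
    · rintro ⟨y, hy, rfl⟩; exact hy
    · intro hx
      exact ⟨⟨x, h.sub C hC x hx⟩, hx, rfl⟩
  have huniq : ∀ B ∈ parts, ∀ B' ∈ parts, ∀ x, x ∈ B → x ∈ B' → B = B' := by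
    intro B hB B' hB' x hx hx'
    exact Finset.map_injective Fin.valEmbedding
      (h.uniq _ ((hp B).1 hB) _ ((hp B').1 hB') x (Finset.mem_map.2 ⟨x, hx, rfl⟩)
        (Finset.mem_map.2 ⟨x, hx', rfl⟩))
  let P : Finpartition (univ : Finset (Fin n)) := Finpartition.ofExistsUnique parts
    (fun B _ => subset_univ B)
    (by
      intro x _
      obtain ⟨C, hC, hxC⟩ := h.cov x x.2
      obtain ⟨B, rfl⟩ := hinv C hC
      have hxB : x ∈ B := by
        obtain ⟨y, hy, hyx⟩ := Finset.mem_map.1 hxC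
        have : y = x := Fin.ext hyx
        exact this ▸ hy
      refine ⟨B, ⟨(hp B).2 hC, hxB⟩, ?_⟩
      rintro B' ⟨hB', hxB'⟩
      exact huniq B' hB' B ((hp B).2 hC) x hxB' hxB)
    (by
      intro hE
      have := h.ne _ ((hp ∅).1 hE)
      simp at this)
  have hP : P.parts = parts := rfl
  refine ⟨⟨P, ?_⟩, ?_⟩
  · intro a b c d hab hbc hcd B hB B' hB' ha hc hb hd
    rw [hP] at hB hB'
    exact Finset.map_injective Fin.valEmbedding
      (h.nc a b c d hab hbc hcd _ ((hp B).1 hB) _ ((hp B').1 hB')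
        (Finset.mem_map.2 ⟨a, ha, rfl⟩) (Finset.mem_map.2 ⟨c, hc, rfl⟩)
        (Finset.mem_map.2 ⟨b, hb, rfl⟩) (Finset.mem_map.2 ⟨d, hd, rfl⟩))
  · ext C
    simp only [toFam, mem_image]
    constructor
    · rintro ⟨B, hB, rfl⟩
      exact (hp B).1 hB
    · intro hC
      obtain ⟨B, rfl⟩ := hinv C hC
      exact ⟨B, (hp B).2 hC, rfl⟩

lemma sum_NCPart (n : ℕ) :
    ∑ P : NCPart n, ∏ B ∈ P.1.parts, t B.card = A t n n := by
  rw [A]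
  refine sum_bij (fun P _ => toFam P) (fun P _ => toFam_mem P) (fun P _ Q _ h => toFam_inj h)
    (fun S hS => ?_) (fun P _ => ?_)
  · obtain ⟨P, hP⟩ := toFam_surj hS
    exact ⟨P, mem_univ _, hP⟩
  · rw [toFam, prod_image (fun _ _ _ _ h => Finset.map_injective Fin.valEmbedding h)]
    simp

end bridge

section dual
open PowerSeries

/-- Coefficient ring with two square-zero infinitesimals. -/
abbrev DD : Type := DualNumber (DualNumber ℝ)

/-- First infinitesimal. -/
noncomputable def e1 : DD := TrivSqZeroExt.inl DualNumber.eps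
/-- Second infinitesimal. -/
noncomputable def e2 : DD := DualNumber.eps

lemma e1_sq : e1 * e1 = 0 := by
  rw [e1, ← TrivSqZeroExt.inl_mul, DualNumber.eps_mul_eps, TrivSqZeroExt.inl_zero]

lemma e2_sq : e2 * e2 = 0 := DualNumber.eps_mul_eps

lemma dd_ext {x0 x1 x2 x3 y0 y1 y2 y3 : ℕ}
    (h : (x0 : DD) + x1 * e1 + x2 * e2 + x3 * (e1 * e2) =
      (y0 : DD) + y1 * e1 + y2 * e2 + y3 * (e1 * e2)) :
    x0 = y0 ∧ x1 = y1 ∧ x2 = y2 ∧ x3 = y3 := by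
  have h0 := congrArg (fun z : DD => z.fst.fst) h
  have h1 := congrArg (fun z : DD => z.fst.snd) h
  have h2 := congrArg (fun z : DD => z.snd.fst) h
  have h3 := congrArg (fun z : DD => z.snd.snd) h
  simp [e1, e2] at h0 h1 h2 h3
  exact ⟨h0, h1, h2, h3⟩

lemma dd_tf (m : ℕ) (x : DD) (h : ((m : DD) + 1) * x = 0) : x = 0 := by
  have hm : (m : ℝ) + 1 ≠ 0 := by positivity
  have h0 := congrArg (fun z : DD => z.fst.fst) h
  have h1 := congrArg (fun z : DD => z.fst.snd) h
  have h2 := congrArg (fun z : DD => z.snd.fst) h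
  have h3 := congrArg (fun z : DD => z.snd.snd) h
  simp [hm] at h0 h1 h2 h3
  ext <;> simp_all

lemma exists_ring : ∃ (S : Type) (_ : CommRing S) (f1 f2 : S), f1 * f1 = 0 ∧ f2 * f2 = 0 ∧
    (∀ (m : ℕ) (x : S), ((m : S) + 1) * x = 0 → x = 0) ∧
    (∀ {x0 x1 x2 x3 y0 y1 y2 y3 : ℕ}, (x0 : S) + x1 * f1 + x2 * f2 + x3 * (f1 * f2) =
      (y0 : S) + y1 * f1 + y2 * f2 + y3 * (f1 * f2) →
      x0 = y0 ∧ x1 = y1 ∧ x2 = y2 ∧ x3 = y3) :=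
  ⟨DD, inferInstance, e1, e2, e1_sq, e2_sq, dd_tf, dd_ext⟩

section gen
variable {S : Type*} [CommRing S]

/-- The weights. -/
def wt (e1 e2 : S) (k l j : ℕ) : S :=
  1 + (if j = k then e1 else 0) + (if j = l then e2 else 0)

lemma prod_wt {e1 e2 : S} (h1 : e1 * e1 = 0) (h2 : e2 * e2 = 0) {α : Type*} [DecidableEq α] {k l : ℕ} (hkl : k ≠ l) (F : Finset (Finset α)) :
    ∏ B ∈ F, wt e1 e2 k l B.card = 1 + ((F.filter fun B => B.card = k).card : S) * e1
      + ((F.filter fun B => B.card = l).card : S) * e2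
      + (((F.filter fun B => B.card = k).card * (F.filter fun B => B.card = l).card : ℕ) : S)
        * (e1 * e2) := by
  induction F using Finset.induction_on with
  | empty => simp
  | insert B F hB ih =>
    rw [prod_insert hB, ih, filter_insert, filter_insert, wt]
    by_cases hk : B.card = k
    · have hl : B.card ≠ l := by omega
      rw [if_pos hk, if_neg hl, if_pos hk, if_neg hl, card_insert_of_notMem (by simp [hB])]
      push_cast
      linear_combination (((F.filter fun B => B.card = k).card : S) +
        ((F.filter fun B => B.card = k).card : S) *
          ((F.filter fun B => B.card = l).card : S) * e2) * h1
    · by_cases hl : B.card = l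
      · rw [if_neg hk, if_pos hl, if_neg hk, if_pos hl, card_insert_of_notMem (by simp [hB])]
        push_cast
        linear_combination (((F.filter fun B => B.card = l).card : S) +
          ((F.filter fun B => B.card = k).card : S) *
            ((F.filter fun B => B.card = l).card : S) * e1) * h2
      · rw [if_neg hk, if_neg hl, if_neg hk, if_neg hl]
        ring

lemma add_pow_nil (g E D : S) (hE : E * E = 2 * D) (hD : E * D = 0)
    (m : ℕ) : (g + E) ^ (m + 2) = g ^ (m + 2) + ((m : S) + 2) * (g ^ (m + 1) * E)
      + ((m : S) + 2) * ((m : S) + 1) * (g ^ m * D) := by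
  induction m with
  | zero => push_cast; linear_combination hE
  | succ m ih =>
    rw [pow_succ, ih]
    push_cast
    linear_combination ((m : S) + 2) * g ^ (m + 1) * hE
      + ((m : S) + 2) * ((m : S) + 1) * g ^ m * hD

lemma coeff_g (d i : ℕ) : coeff i ((PowerSeries.mk (1 : ℕ → S)) ^ (d + 1)) =
    ((Nat.choose (d + i) d : ℕ) : S) := by
  have := mk_one_pow_eq_mk_choose_add S d
  rw [this, coeff_mk]

lemma mk_wt (f1 f2 : S) (k l : ℕ) :
    PowerSeries.mk (fun j => 1 + (if j = k then f1 else 0) + (if j = l then f2 else 0)) =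
    PowerSeries.mk (1 : ℕ → S) + (C f1 * X ^ k + C f2 * X ^ l) := by
  ext j : 1
  simp [coeff_X_pow, add_assoc]

lemma coeff_wt' {f1 f2 : S} (hf1 : f1 * f1 = 0) (hf2 : f2 * f2 = 0) {k l m : ℕ}
    (h : k + l ≤ m + 2) :
    coeff (m + 2) (PowerSeries.mk
      (fun j => 1 + (if j = k then f1 else 0) + (if j = l then f2 else 0)) ^ (m + 3)) =
      ((Nat.choose (2 * (m + 2)) (m + 2) : ℕ) : S)
      + (((m + 3) * Nat.choose (m + 1 + (m + 2 - k)) (m + 1) : ℕ) : S) * f1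
      + (((m + 3) * Nat.choose (m + 1 + (m + 2 - l)) (m + 1) : ℕ) : S) * f2
      + (((m + 3) * (m + 2) * Nat.choose (m + (m + 2 - (k + l))) m : ℕ) : S) * (f1 * f2) := by
  have hC1 : (C f1 : PowerSeries S) * C f1 = 0 := by rw [← map_mul, hf1, map_zero]
  have hC2 : (C f2 : PowerSeries S) * C f2 = 0 := by rw [← map_mul, hf2, map_zero]
  have key := add_pow_nil (PowerSeries.mk (1 : ℕ → S)) (C f1 * X ^ k + C f2 * X ^ l)
    (C (f1 * f2) * X ^ (k + l))
    (by rw [map_mul, pow_add]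
        linear_combination (X ^ k * X ^ k) * hC1 + (X ^ l * X ^ l) * hC2)
    (by rw [map_mul, pow_add]
        linear_combination (X ^ k * (X ^ k * X ^ l) * C f2) * hC1
          + (X ^ l * (X ^ k * X ^ l) * C f1) * hC2) (m + 1)
  rw [mk_wt, key]
  set g := PowerSeries.mk (1 : ℕ → S) with hg
  have r1 : (((m + 1 : ℕ) : PowerSeries S) + 2) * (g ^ (m + 1 + 1) * (C f1 * X ^ k + C f2 * X ^ l))
      = C (((m + 1 : ℕ) : S) + 2) * (C f1 * (g ^ (m + 1 + 1) * X ^ k)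
        + C f2 * (g ^ (m + 1 + 1) * X ^ l)) := by
    simp only [map_add, map_natCast, map_ofNat]; ring
  have r2 : (((m + 1 : ℕ) : PowerSeries S) + 2) * (((m + 1 : ℕ) : PowerSeries S) + 1) *
      (g ^ (m + 1) * (C (f1 * f2) * X ^ (k + l)))
      = C ((((m + 1 : ℕ) : S) + 2) * (((m + 1 : ℕ) : S) + 1) * (f1 * f2)) *
        (g ^ (m + 1) * X ^ (k + l)) := by
    simp only [map_add, map_mul, map_natCast, map_ofNat, map_one]; ring
  rw [r1, r2]
  rw [map_add, map_add, coeff_C_mul, map_add, coeff_C_mul, coeff_C_mul, coeff_C_mul]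
  simp only [coeff_mul_X_pow']
  rw [if_pos (by omega), if_pos (by omega), if_pos (by omega), hg, coeff_g, coeff_g, coeff_g,
    coeff_g, show m + 1 + 1 + (m + 2) = 2 * (m + 2) by ring]
  push_cast
  ring

end gen

lemma moments {k l m : ℕ} (hk : 1 ≤ k) (hl : 1 ≤ l) (hkl : k ≠ l) (h : k + l ≤ m + 2) :
    (m + 3) * Fintype.card (NCPart (m + 2)) = Nat.choose (2 * (m + 2)) (m + 2) ∧
    ∑ P : NCPart (m + 2), numBlocksOfSize k P = Nat.choose (m + 1 + (m + 2 - k)) (m + 1) ∧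
    ∑ P : NCPart (m + 2), numBlocksOfSize l P = Nat.choose (m + 1 + (m + 2 - l)) (m + 1) ∧
    ∑ P : NCPart (m + 2), numBlocksOfSize k P * numBlocksOfSize l P =
      (m + 2) * Nat.choose (m + (m + 2 - (k + l))) m := by
  obtain ⟨S, _, e1, e2, s1, s2, htf, hext⟩ := exists_ring
  have h1 := A_formula (wt e1 e2 k l) htf (by rw [wt, if_neg (by omega), if_neg (by omega)]; simp) (m + 2)
  rw [show wt e1 e2 k l = fun j => 1 + (if j = k then e1 else 0) + (if j = l then e2 else 0) from rfl,
    coeff_wt' s1 s2 h,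
    ← show wt e1 e2 k l = fun j => 1 + (if j = k then e1 else 0) + (if j = l then e2 else 0) from rfl,
    ← sum_NCPart] at h1
  have h2 : ∑ P : NCPart (m + 2), ∏ B ∈ P.1.parts, wt e1 e2 k l B.card =
      ((Fintype.card (NCPart (m + 2)) : ℕ) : S) +
      ((∑ P : NCPart (m + 2), numBlocksOfSize k P : ℕ) : S) * e1 +
      ((∑ P : NCPart (m + 2), numBlocksOfSize l P : ℕ) : S) * e2 +
      ((∑ P : NCPart (m + 2), numBlocksOfSize k P * numBlocksOfSize l P : ℕ) : S)
        * (e1 * e2) := by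
    simp only [prod_wt s1 s2 hkl, sum_add_distrib, Nat.cast_sum, sum_mul]
    simp [numBlocksOfSize]
  rw [h2] at h1
  have h3 := hext (x0 := (m + 3) * Fintype.card (NCPart (m + 2)))
    (x1 := (m + 3) * ∑ P : NCPart (m + 2), numBlocksOfSize k P)
    (x2 := (m + 3) * ∑ P : NCPart (m + 2), numBlocksOfSize l P)
    (x3 := (m + 3) * ∑ P : NCPart (m + 2), numBlocksOfSize k P * numBlocksOfSize l P)
    (by rw [← h1]; push_cast; ring)
  obtain ⟨a, b, c, d⟩ := h3
  refine ⟨a, Nat.eq_of_mul_eq_mul_left (by omega) b, Nat.eq_of_mul_eq_mul_left (by omega) c, ?_⟩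
  rw [mul_assoc] at d
  exact Nat.eq_of_mul_eq_mul_left (by omega) d

end dual

section asymp
open Asymptotics

/-- `f n = 1 + c / n + O(1 / n ^ 2)`. -/
def Ap (f : ℕ → ℝ) (c : ℝ) : Prop :=
  (fun n : ℕ => f n - (1 + c / n)) =O[atTop] (fun n : ℕ => 1 / (n : ℝ) ^ 2)

lemma lin_bdd (c : ℝ) : (fun n : ℕ => 1 + c / (n : ℝ)) =O[atTop] (fun _ : ℕ => (1 : ℝ)) := by
  apply IsBigO.of_bound (1 + |c|)
  filter_upwards [eventually_ge_atTop 1] with n hn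
  have hn' : (1 : ℝ) ≤ n := by exact_mod_cast hn
  rw [norm_one, mul_one, Real.norm_eq_abs]
  refine (abs_add_le _ _).trans ?_
  rw [abs_one, abs_div, abs_of_pos (by linarith : (0 : ℝ) < n)]
  have := div_le_self (abs_nonneg c) hn'
  linarith

lemma sq_bdd : (fun n : ℕ => 1 / (n : ℝ) ^ 2) =O[atTop] (fun _ : ℕ => (1 : ℝ)) := by
  apply IsBigO.of_bound 1
  filter_upwards [eventually_ge_atTop 1] with n hn
  have hn' : (1 : ℝ) ≤ n := by exact_mod_cast hn
  rw [norm_one, mul_one, Real.norm_eq_abs, abs_of_nonneg (by positivity)]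
  rw [div_le_one (by positivity)]
  nlinarith

lemma Ap.mul {f g : ℕ → ℝ} {c d : ℝ} (hf : Ap f c) (hg : Ap g d) :
    Ap (fun n => f n * g n) (c + d) := by
  have hgb : g =O[atTop] (fun _ : ℕ => (1 : ℝ)) := by
    have := (hg.trans sq_bdd).add (lin_bdd d)
    simpa using this
  have h1 := IsBigO.mul hf hgb
  have h2 := IsBigO.mul (lin_bdd c) hg
  have h3 : (fun n : ℕ => c * d * (1 / (n : ℝ) ^ 2)) =O[atTop] (fun n : ℕ => 1 / (n : ℝ) ^ 2) :=
    (isBigO_refl _ _).const_mul_left _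
  simp only [mul_one, one_mul] at h1 h2
  refine ((h1.add h2).add h3).congr' ?_ (EventuallyEq.refl _ _)
  filter_upwards [eventually_ge_atTop 1] with n hn
  have hn' : (n : ℝ) ≠ 0 := by positivity
  field_simp
  ring

lemma Ap.fac (i s : ℝ) : Ap (fun n => 2 * ((n : ℝ) - i) / (2 * n - i - s)) ((s - i) / 2) := by
  apply IsBigO.of_bound (|(s - i) * (i + s)| / 2)
  filter_upwards [eventually_ge_atTop 1, eventually_ge_atTop (Nat.ceil (i + s))] with n hn hN
  have hn' : (1 : ℝ) ≤ n := by exact_mod_cast hn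
  have hN' : i + s ≤ n := (Nat.le_ceil _).trans (by exact_mod_cast hN)
  have hpos : (n : ℝ) ≤ 2 * n - i - s := by linarith
  have hpos' : 0 < 2 * (n : ℝ) - i - s := by linarith
  have e : 2 * ((n : ℝ) - i) / (2 * n - i - s) - (1 + (s - i) / 2 / n) =
      ((s - i) * (i + s) / 2) / (n * (2 * n - i - s)) := by
    have : (n : ℝ) ≠ 0 := by positivity
    field_simp
    ring
  rw [e, Real.norm_eq_abs, Real.norm_eq_abs, abs_div, abs_div,
    abs_of_pos (by positivity : (0 : ℝ) < n * (2 * n - i - s)),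
    abs_of_pos (by norm_num : (0 : ℝ) < 2), abs_of_pos (by positivity : 0 < 1 / (n : ℝ) ^ 2),
    mul_one_div]
  gcongr
  nlinarith

lemma Ap.one : Ap (fun _ => 1) 0 := by
  simp [Ap, isBigO_zero]

lemma Ap.prod (s : ℝ) (k : ℕ) :
    Ap (fun n => ∏ i ∈ Finset.range k, 2 * ((n : ℝ) - i) / (2 * n - i - s))
      ((s * k - k * (k - 1) / 2) / 2) := by
  induction k with
  | zero => simpa using Ap.one
  | succ k ih =>
    have := ih.mul (Ap.fac k s)
    simp only [Finset.prod_range_succ]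
    convert! this using 1
    push_cast
    ring

lemma choose_step (a d : ℕ) :
    (Nat.choose (a + d) a : ℝ) * (a + d + 1) = Nat.choose (a + (d + 1)) a * (d + 1) := by
  have := Nat.choose_mul_succ_eq (a + d) a
  rw [show a + d + 1 - a = d + 1 by omega] at this
  exact_mod_cast this

lemma choose_prod (a n k s : ℕ) (hs : 1 ≤ s) (has : a + s = n) (hk : k ≤ n) (ha : 1 ≤ a) :
    (2 : ℝ) ^ k * Nat.choose (a + (n - k)) a = Nat.choose (a + n) a *
      ∏ i ∈ Finset.range k, 2 * ((n : ℝ) - i) / (2 * n - i - s) := by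
  induction k with
  | zero => simp
  | succ k ih =>
    have ih := ih (by omega)
    rw [Finset.prod_range_succ, ← mul_assoc, ← ih]
    obtain ⟨d, hd⟩ : ∃ d, n = k + 1 + d := ⟨n - (k + 1), by omega⟩
    have e1 : n - k = d + 1 := by omega
    have e2 : n - (k + 1) = d := by omega
    have h := choose_step a d
    have hn : (n : ℝ) = k + 1 + d := by exact_mod_cast hd
    have hsn : (a : ℝ) + s = n := by exact_mod_cast has
    have q1 : (n : ℝ) - k = d + 1 := by linarith
    have q2 : 2 * (n : ℝ) - k - s = a + d + 1 := by linarith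
    rw [e1, e2, q1, q2]
    have hpos : (a : ℝ) + d + 1 ≠ 0 := by positivity
    rw [mul_div_assoc', eq_div_iff hpos, pow_succ]
    linear_combination (2 * 2 ^ k) * h

lemma base1 (m : ℕ) :
    (Nat.choose (2 * (m + 2)) (m + 2) : ℝ) = 2 * Nat.choose (m + 1 + (m + 2)) (m + 1) := by
  have h := Nat.choose_symm_half (m + 1)
  have h2 := Nat.choose_succ_succ (2 * (m + 1) + 1) (m + 1)
  rw [show m + 1 + (m + 2) = 2 * (m + 1) + 1 by ring,
    show 2 * (m + 2) = (2 * (m + 1) + 1).succ by simp only [Nat.succ_eq_add_one]; ring,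
    show m + 2 = (m + 1).succ from rfl, h2, Nat.succ_eq_add_one, h]
  push_cast
  ring

lemma base2 (m : ℕ) :
    2 * (2 * (m : ℝ) + 3) * (Nat.choose (m + (m + 2)) m : ℝ) =
      (m + 1) * Nat.choose (2 * (m + 2)) (m + 2) := by
  rw [base1]
  have h := Nat.add_one_mul_choose_eq (m + (m + 2)) m
  rw [show m + (m + 2) + 1 = m + 1 + (m + 2) by ring] at h
  have h' : ((m : ℝ) + 1 + (m + 2)) * (Nat.choose (m + (m + 2)) m : ℝ) =
    Nat.choose (m + 1 + (m + 2)) (m + 1) * (m + 1) := by exact_mod_cast h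
  linear_combination 2 * h'

lemma cov_formula {k l n : ℕ} (hk : 1 ≤ k) (hl : 1 ≤ l) (hkl : k ≠ l) (h : k + l ≤ n) :
    2 ^ (k + l + 2) * covBlocksOfSize k l n =
      (n : ℝ) * (n + 1) * ((2 * ((n : ℝ) - 1) / (2 * n - 1 - 0)) *
        ∏ i ∈ Finset.range (k + l), 2 * ((n : ℝ) - i) / (2 * n - i - (2 : ℕ))) -
      (n + 1) ^ 2 * ((∏ i ∈ Finset.range k, 2 * ((n : ℝ) - i) / (2 * n - i - (1 : ℕ))) *
        ∏ i ∈ Finset.range l, 2 * ((n : ℝ) - i) / (2 * n - i - (1 : ℕ))) := by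
  obtain ⟨m, rfl⟩ : ∃ m, n = m + 2 := ⟨n - 2, by omega⟩
  have hm : 1 ≤ m := by omega
  obtain ⟨M0, M1, M2, M3⟩ := moments hk hl hkl h
  have P1 := choose_prod (m + 1) (m + 2) k 1 le_rfl rfl (by omega) (by omega)
  have P2 := choose_prod (m + 1) (m + 2) l 1 le_rfl rfl (by omega) (by omega)
  have P3 := choose_prod m (m + 2) (k + l) 2 (by omega) rfl (by omega) hm
  have B1 := base1 m
  have B2 := base2 m
  have M0' : ((m : ℝ) + 3) * Fintype.card (NCPart (m + 2)) =
    Nat.choose (2 * (m + 2)) (m + 2) := by exact_mod_cast M0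
  have M1' : ∑ P : NCPart (m + 2), (numBlocksOfSize k P : ℝ) =
    Nat.choose (m + 1 + (m + 2 - k)) (m + 1) := by exact_mod_cast M1
  have M2' : ∑ P : NCPart (m + 2), (numBlocksOfSize l P : ℝ) =
    Nat.choose (m + 1 + (m + 2 - l)) (m + 1) := by exact_mod_cast M2
  have M3' : ∑ P : NCPart (m + 2), (numBlocksOfSize k P : ℝ) * (numBlocksOfSize l P : ℝ) =
    (m + 2) * Nat.choose (m + (m + 2 - (k + l))) m := by exact_mod_cast M3
  have hC : (0 : ℝ) < Nat.choose (m + 1 + (m + 2)) (m + 1) := by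
    exact_mod_cast Nat.choose_pos (by omega)
  rw [covBlocksOfSize, M1', M2', M3']
  set U := ∏ i ∈ Finset.range (k + l),
    2 * (((m + 2 : ℕ) : ℝ) - i) / (2 * ((m + 2 : ℕ) : ℝ) - i - (2 : ℕ))
  set V := ∏ i ∈ Finset.range k,
    2 * (((m + 2 : ℕ) : ℝ) - i) / (2 * ((m + 2 : ℕ) : ℝ) - i - (1 : ℕ))
  set W := ∏ i ∈ Finset.range l,
    2 * (((m + 2 : ℕ) : ℝ) - i) / (2 * ((m + 2 : ℕ) : ℝ) - i - (1 : ℕ))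
  generalize (Nat.choose (m + 1 + (m + 2 - k)) (m + 1) : ℝ) = x at *
  generalize (Nat.choose (m + 1 + (m + 2 - l)) (m + 1) : ℝ) = y at *
  generalize (Nat.choose (m + (m + 2 - (k + l))) m : ℝ) = z at *
  generalize (Nat.choose (m + 1 + (m + 2)) (m + 1) : ℝ) = c at *
  generalize (Nat.choose (m + (m + 2)) m : ℝ) = b at *
  generalize (Fintype.card (NCPart (m + 2)) : ℝ) = N at *
  rw [B1] at M0' B2
  have hm0 : (0 : ℝ) ≤ m := Nat.cast_nonneg m
  have h3 : (m : ℝ) + 3 ≠ 0 := by positivity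
  have h5 : 2 * (m : ℝ) + 3 ≠ 0 := by positivity
  have hN : N = 2 * c / (m + 3) := by rw [eq_div_iff h3]; linarith
  have hb : b = (m + 1) * c / (2 * m + 3) := by rw [eq_div_iff h5]; linarith
  have hx : x = c * V / 2 ^ k := by rw [eq_div_iff (by positivity)]; linarith
  have hy : y = c * W / 2 ^ l := by rw [eq_div_iff (by positivity)]; linarith
  have hz : z = b * U / 2 ^ (k + l) := by rw [eq_div_iff (by positivity)]; linarith
  rw [hz, hx, hy, hN, hb]
  push_cast
  have h6 : 2 * ((m : ℝ) + 2) - 1 - 0 = 2 * m + 3 := by ring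
  rw [h6]
  have hc : c ≠ 0 := hC.ne'
  rw [pow_add, pow_add]
  field_simp
  ring

lemma cov_bdd {k l : ℕ} (hk : 1 ≤ k) (hl : 1 ≤ l) (hkl : k ≠ l) :
    (fun n : ℕ => covBlocksOfSize k l n +
        ((n : ℝ) / 2 ^ (k + l + 3)) * (2 + ((k : ℝ) - 1) * ((l : ℝ) - 1)))
      =O[atTop] (fun _ : ℕ => (1 : ℝ)) := by
  have hU := (Ap.fac 1 0).mul (Ap.prod ((2 : ℕ) : ℝ) (k + l))
  have hY := (Ap.prod ((1 : ℕ) : ℝ) k).mul (Ap.prod ((1 : ℕ) : ℝ) l)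
  set u : ℝ := (0 - 1) / 2 + (((2 : ℕ) : ℝ) * ((k + l : ℕ) : ℝ)
    - ((k + l : ℕ) : ℝ) * (((k + l : ℕ) : ℝ) - 1) / 2) / 2 with hu
  set y : ℝ := (((1 : ℕ) : ℝ) * (k : ℝ) - (k : ℝ) * ((k : ℝ) - 1) / 2) / 2 +
    (((1 : ℕ) : ℝ) * (l : ℝ) - (l : ℝ) * ((l : ℝ) - 1) / 2) / 2 with hy
  have huy : -1 + u - y = -(2 + ((k : ℝ) - 1) * ((l : ℝ) - 1)) / 2 := by
    rw [hu, hy]; push_cast; ring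
  have q1 : (fun n : ℕ => (n : ℝ) * (n + 1)) =O[atTop] (fun n : ℕ => (n : ℝ) ^ 2) := by
    apply IsBigO.of_bound 2
    filter_upwards [eventually_ge_atTop 1] with n hn
    have hn' : (1 : ℝ) ≤ n := by exact_mod_cast hn
    rw [Real.norm_of_nonneg (by positivity), Real.norm_of_nonneg (by positivity)]
    nlinarith
  have q2 : (fun n : ℕ => ((n : ℝ) + 1) ^ 2) =O[atTop] (fun n : ℕ => (n : ℝ) ^ 2) := by
    apply IsBigO.of_bound 4
    filter_upwards [eventually_ge_atTop 1] with n hn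
    have hn' : (1 : ℝ) ≤ n := by exact_mod_cast hn
    rw [Real.norm_of_nonneg (by positivity), Real.norm_of_nonneg (by positivity)]
    nlinarith
  have q3 : (fun n : ℕ => (n : ℝ) ^ 2 * (1 / (n : ℝ) ^ 2)) =O[atTop]
      (fun _ : ℕ => (1 : ℝ)) := by
    apply IsBigO.of_bound 1
    filter_upwards [eventually_ge_atTop 1] with n hn
    have hn' : (n : ℝ) ≠ 0 := by positivity
    rw [mul_one_div_cancel (by positivity)]
    simp
  have t1 := (q1.mul hU).trans q3
  have t2 := (q2.mul hY).trans q3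
  have t3 := lin_bdd (-y)
  have t4 : (fun _ : ℕ => u - 2 * y - 2) =O[atTop] (fun _ : ℕ => (1 : ℝ)) :=
    isBigO_const_const _ one_ne_zero _
  have t := (((t1.sub t2).add t3).add t4).const_mul_left ((1 : ℝ) / 2 ^ (k + l + 2))
  refine t.congr' ?_ (EventuallyEq.refl _ _)
  filter_upwards [eventually_ge_atTop (k + l)] with n hn
  have hn' : (n : ℝ) ≠ 0 := by
    have : 1 ≤ n := by omega
    positivity
  have hcov := cov_formula hk hl hkl hn
  have hcov' : covBlocksOfSize k l n = (1 / 2 ^ (k + l + 2)) *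
    (2 ^ (k + l + 2) * covBlocksOfSize k l n) := by field_simp
  have hlast : ((n : ℝ) / 2 ^ (k + l + 3)) * (2 + ((k : ℝ) - 1) * ((l : ℝ) - 1)) =
      (1 / 2 ^ (k + l + 2)) * (- n * (-1 + u - y)) := by
    rw [huy, pow_succ _ (k + l + 2)]
    field_simp
  rw [hcov', hlast, hcov, ← mul_add]
  congr 1
  field_simp
  ring

end asymp

end NCAux

/-- For fixed `k ≠ l` with `k, l ≥ 1`,
`Cov(X_n^{(k)}, X_n^{(l)}) = −(n/2^{k+l+3})·(2 + (k − 1)(l − 1)) + O(1)`: there is a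
constant `K` (possibly depending on `k, l`) bounding the difference for all `n ≥ 1`.
In particular, the numbers of blocks of different sizes are negatively correlated
for all large `n`. -/
theorem covBlocksOfSize_asymptotic (k l : ℕ) (hk : 1 ≤ k) (hl : 1 ≤ l) (hkl : k ≠ l) :
    (∃ K : ℝ, ∀ n : ℕ, 1 ≤ n →
      |covBlocksOfSize k l n +
        ((n : ℝ) / 2 ^ (k + l + 3)) * (2 + ((k : ℝ) - 1) * ((l : ℝ) - 1))| ≤ K) ∧
    (∀ᶠ n : ℕ in atTop, covBlocksOfSize k l n < 0) := by
  have hO := NCAux.cov_bdd hk hl hkl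
  obtain ⟨K, hK⟩ := Asymptotics.isBigO_one_nat_atTop_iff.1 hO
  simp only [Real.norm_eq_abs] at hK
  refine ⟨⟨K, fun n _ => hK n⟩, ?_⟩
  have hk' : (1 : ℝ) ≤ k := by exact_mod_cast hk
  have hl' : (1 : ℝ) ≤ l := by exact_mod_cast hl
  have hc : 0 < (2 + ((k : ℝ) - 1) * ((l : ℝ) - 1)) / 2 ^ (k + l + 3) := by
    have : 0 ≤ ((k : ℝ) - 1) * ((l : ℝ) - 1) :=
      mul_nonneg (by linarith) (by linarith)
    positivity
  have htend : Tendsto (fun n : ℕ => (n : ℝ) *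
      ((2 + ((k : ℝ) - 1) * ((l : ℝ) - 1)) / 2 ^ (k + l + 3))) atTop atTop :=
    tendsto_natCast_atTop_atTop.atTop_mul_const hc
  filter_upwards [htend.eventually_gt_atTop K] with n hn
  have h1 := (abs_le.1 (hK n)).2
  have h2 : ((n : ℝ) / 2 ^ (k + l + 3)) * (2 + ((k : ℝ) - 1) * ((l : ℝ) - 1)) = (n : ℝ) *
      ((2 + ((k : ℝ) - 1) * ((l : ℝ) - 1)) / 2 ^ (k + l + 3)) := by ring
  linarith
end

section
/- Fix integers n ≥ 0 and l ≥ 1, and let N^{(l)}_{n,k} be the number of non-crossing partitions of [n] with exactly k blocks of size l. Then, as an identity of polynomials in q over ℚ, (n + 1)·Σ_{k=0}^{n} N^{(l)}_{n,k} q^k = Σ_{j≥0, j·l ≤ n} binom(n+1, j)·(q − 1)^j·binom(2n − j(l+1), n − j). (This is the Lagrange-inversion formula C^{(l)}_n(q) = (1/(n+1))·[u^n]((1/(1−u)) + u^l(q−1))^{n+1} written out explicitly.) -/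
/-- `N^{(l)}_{n,k}`: the number of non-crossing partitions of `[n]` having exactly `k`
blocks of size `l`. -/
noncomputable def Nblk (l n k : ℕ) : ℕ := Nat.card {π : NCPart n // numBlocksOfSize l π = k}


namespace NCProof
open Finset

variable {α : Type} [LinearOrder α]

structure Good (T U : Finset α) (P : Finset (Finset α)) : Prop where
  sub : U ⊆ T
  ne : ∀ B ∈ P, B.Nonempty
  cover : ∀ x ∈ T, x ∉ U → ∃ B ∈ P, x ∈ B
  mem : ∀ B ∈ P, ∀ x ∈ B, x ∈ T ∧ x ∉ U
  disj : ∀ B ∈ P, ∀ B' ∈ P, ∀ x ∈ B, x ∈ B' → B = B'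
  nc : ∀ a b c d : α, a < b → b < c → c < d → ∀ B ∈ P, ∀ B' ∈ P,
    a ∈ B → c ∈ B → b ∈ B' → d ∈ B' → B = B'
  vis : ∀ B ∈ P, ∀ u ∈ U, ∀ x ∈ B, ∀ y ∈ B, x < u → u < y → False

theorem seg_unique {L1 R1 L2 R2 : Finset α} (h : L1 ∪ R1 = L2 ∪ R2)
    (h1 : ∀ x ∈ L1, ∀ y ∈ R1, x < y) (h2 : ∀ x ∈ L2, ∀ y ∈ R2, x < y)
    (hc : L1.card = L2.card) : L1 = L2 ∧ R1 = R2 := by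
  have key : L1 = L2 := by
    by_cases hs : L1 ⊆ L2
    · exact eq_of_subset_of_card_le hs hc.ge
    · obtain ⟨x, hx, hx'⟩ := not_subset.1 hs
      have hxR : x ∈ R2 := by
        have : x ∈ L2 ∪ R2 := h ▸ mem_union_left _ hx
        grind
      have : L2 ⊆ L1 := by
        intro y hy
        have hyx := h2 y hy x hxR
        have : y ∈ L1 ∪ R1 := h ▸ mem_union_left _ hy
        rcases mem_union.1 this with h' | h'
        · exact h'
        · exact absurd (h1 x hx y h') (not_lt.2 hyx.le)
      exact (eq_of_subset_of_card_le this hc.le).symm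
  refine ⟨key, ?_⟩
  subst key
  ext y
  have := Finset.ext_iff.1 h y
  constructor
  · intro hy
    have : y ∉ L1 := fun hy' => lt_irrefl _ (h1 y hy' y hy)
    grind
  · intro hy
    have : y ∉ L1 := fun hy' => lt_irrefl _ (h2 y hy' y hy)
    grind

theorem seg_exists (k : ℕ) : ∀ (U : Finset α), k ≤ U.card → ∃ L R : Finset α, U = L ∪ R ∧
    (∀ x ∈ L, ∀ y ∈ R, x < y) ∧ L.card = k := by
  induction k with
  | zero => intro U _; exact ⟨∅, U, by simp, by simp, rfl⟩
  | succ k ih =>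
    intro U hU
    have hne : U.Nonempty := card_pos.1 (by omega)
    have hm := U.min'_mem hne
    obtain ⟨L, R, h1, h2, h3⟩ := ih (U.erase (U.min' hne)) (by rw [card_erase_of_mem hm]; omega)
    have hlt : ∀ y ∈ L ∪ R, U.min' hne < y := by
      intro y hy
      rw [← h1] at hy
      exact lt_of_le_of_ne (U.min'_le y (mem_of_mem_erase hy)) (ne_of_mem_erase hy).symm
    refine ⟨insert (U.min' hne) L, R, ?_, ?_, ?_⟩
    · rw [insert_union, ← h1, insert_erase hm]
    · intro x hx y hy
      rcases mem_insert.1 hx with rfl | hx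
      · exact hlt y (mem_union_right _ hy)
      · exact h2 x hx y hy
    · rw [card_insert_of_notMem, h3]
      intro h
      exact lt_irrefl _ (hlt _ (mem_union_left _ h))

theorem good_fwd {T U : Finset α} {P : Finset (Finset α)} {b : α} (hb : ∀ x ∈ T, b < x)
    (h : Good (insert b T) U P) {B : Finset α} (hB : B ∈ P) (hbB : b ∈ B) :
    Good T (U ∪ B.erase b) (P.erase B) := by
  obtain ⟨h1, h2, h3, h4, h5, h6, h7⟩ := h
  have hbU := (h4 B hB b hbB).2
  constructor
  · intro x hx
    have := h4 B hB x
    grind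
  · grind
  · intro x hx hxU
    obtain ⟨C, hC, hxC⟩ := h3 x (by simp [hx]) (by grind)
    have := hb x hx
    refine ⟨C, ?_, hxC⟩
    have : x ≠ b := this.ne'
    grind
  · intro C hC x hx
    have hC' := mem_of_mem_erase hC
    have := h4 C hC' x hx
    have hne : x ∉ B := fun hxB => ne_of_mem_erase hC (h5 C hC' B hB x hx hxB)
    grind
  · grind
  · intro a b c d hab hbc hcd C hC D hD
    exact h6 a b c d hab hbc hcd C (mem_of_mem_erase hC) D (mem_of_mem_erase hD)
  · intro C hC u hu x hx y hy hxu huy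
    have hC' := mem_of_mem_erase hC
    rcases mem_union.1 hu with hu | hu
    · exact h7 C hC' u hu x hx y hy hxu huy
    · have hxT := (h4 C hC' x hx).1
      have hxb : x ≠ b := by
        rintro rfl
        exact ne_of_mem_erase hC (h5 C hC' B hB _ hx hbB)
      have := hb x (by grind)
      exact ne_of_mem_erase hC (h6 b x u y this hxu huy B hB C hC' hbB (mem_of_mem_erase hu) hx hy).symm

theorem good_lt {T U : Finset α} {P : Finset (Finset α)} {b : α} (hb : ∀ x ∈ T, b < x)
    (h : Good (insert b T) U P) {B : Finset α} (hB : B ∈ P) (hbB : b ∈ B) :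
    ∀ x ∈ B.erase b, ∀ y ∈ U, x < y := by
  intro x hx y hy
  by_contra hlt
  have hne : x ≠ y := by
    rintro rfl
    exact (h.mem B hB x (mem_of_mem_erase hx)).2 hy
  have hyx : y < x := lt_of_le_of_ne (not_lt.1 hlt) hne.symm
  have hyb : y ≠ b := by
    rintro rfl
    exact (h.mem B hB _ hbB).2 hy
  have hyT : y ∈ T := by have := h.sub hy; grind
  exact h.vis B hB y hy b hbB x (mem_of_mem_erase hx) (hb y hyT) hyx

theorem good_bwd {T L R : Finset α} {P : Finset (Finset α)} {b : α} (hb : ∀ x ∈ T, b < x)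
    (h : Good T (L ∪ R) P) (hLR : ∀ x ∈ L, ∀ y ∈ R, x < y) :
    Good (insert b T) R (insert (insert b L) P) := by
  obtain ⟨h1, h2, h3, h4, h5, h6, h7⟩ := h
  have hbT : b ∉ T := fun h => lt_irrefl _ (hb b h)
  have hLT : ∀ x ∈ L, x ∈ T := fun x hx => h1 (mem_union_left _ hx)
  have hRT : ∀ x ∈ R, x ∈ T := fun x hx => h1 (mem_union_right _ hx)
  have hd : ∀ x ∈ L, x ∉ R := fun x hx hx' => lt_irrefl _ (hLR x hx x hx')
  constructor
  · intro x hx; simp [hRT x hx]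
  · intro B hB
    rcases mem_insert.1 hB with rfl | hB
    · simp
    · exact h2 B hB
  · intro x hx hxR
    by_cases hxL : x ∈ insert b L
    · exact ⟨_, mem_insert_self _ _, hxL⟩
    · obtain ⟨B, hB, hxB⟩ := h3 x (by grind) (by grind)
      exact ⟨B, mem_insert_of_mem hB, hxB⟩
  · intro B hB x hx
    rcases mem_insert.1 hB with rfl | hB
    · grind
    · have := h4 B hB x hx
      grind
  · intro B hB C hC x hxB hxC
    rcases mem_insert.1 hB with rfl | hB <;> rcases mem_insert.1 hC with rfl | hC
    · rfl
    · have := h4 C hC x hxC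
      grind
    · have := h4 B hB x hxB
      grind
    · exact h5 B hB C hC x hxB hxC
  · intro x y z w hxy hyz hzw B hB C hC hx hz hy hw
    rcases mem_insert.1 hB with rfl | hB <;> rcases mem_insert.1 hC with rfl | hC
    · rfl
    · exfalso
      have hyT := (h4 C hC y hy).1
      have := hb y hyT
      rcases mem_insert.1 hz with rfl | hz
      · exact lt_asymm this hyz
      · exact h7 C hC z (mem_union_left _ hz) y hy w hw hyz hzw
    · exfalso
      have hxT := (h4 B hB x hx).1
      have := hb x hxT
      rcases mem_insert.1 hy with rfl | hy
      · exact lt_asymm this hxy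
      · exact h7 B hB y (mem_union_left _ hy) x hx z hz hxy hyz
    · exact h6 x y z w hxy hyz hzw B hB C hC hx hz hy hw
  · intro B hB u hu x hx y hy hxu huy
    rcases mem_insert.1 hB with rfl | hB
    · rcases mem_insert.1 hy with rfl | hy
      · exact lt_asymm huy (hb u (hRT u hu))
      · exact lt_asymm huy (hLR y hy u hu)
    · exact h7 B hB u (mem_union_right _ hu) x hx y hy hxu huy

noncomputable def Obj (T : Finset α) (r : ℕ) : Finset (Finset α × Finset (Finset α)) :=
  @Finset.filter _ (fun p => Good T p.1 p.2 ∧ p.1.card = r) (Classical.decPred _)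
    (T.powerset ×ˢ T.powerset.powerset)

theorem mem_Obj {T : Finset α} {r : ℕ} {p : Finset α × Finset (Finset α)} :
    p ∈ Obj T r ↔ Good T p.1 p.2 ∧ p.1.card = r := by
  refine (@Finset.mem_filter _ _ (Classical.decPred _) _ _).trans ?_
  refine ⟨fun h => h.2, fun h => ⟨?_, h⟩⟩
  rw [mem_product, mem_powerset, mem_powerset]
  refine ⟨h.1.sub, fun B hB => ?_⟩
  rw [mem_powerset]
  exact fun x hx => (h.1.mem B hB x hx).1

open Polynomial in
noncomputable def wt (l : ℕ) (P : Finset (Finset α)) : Polynomial ℚ :=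
  X ^ (P.filter fun B => B.card = l).card

open Polynomial in
noncomputable def ww (l s : ℕ) : Polynomial ℚ := if s = l then X else 1

theorem wt_insert (l : ℕ) (P : Finset (Finset α)) (B : Finset α) (hB : B ∉ P) :
    wt l (insert B P) = ww l B.card * wt l P := by
  unfold wt ww
  rw [filter_insert]
  split_ifs with h
  · rw [card_insert_of_notMem (by simp [hB]), pow_succ, mul_comm]
  · simp

noncomputable def A (l : ℕ) (T : Finset α) (r : ℕ) : Polynomial ℚ := ∑ p ∈ Obj T r, wt l p.2

theorem A_first (l : ℕ) {T : Finset α} {b : α} (hb : ∀ x ∈ T, b < x) (r : ℕ) :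
    ∑ p ∈ (Obj (insert b T) (r + 1)).filter (fun p => b ∈ p.1), wt l p.2 = A l T r := by
  have hbT : b ∉ T := fun h => lt_irrefl _ (hb b h)
  unfold A
  refine sum_bij' (fun p _ => (p.1.erase b, p.2)) (fun p _ => (insert b p.1, p.2)) ?_ ?_ ?_ ?_ ?_
  · rintro ⟨U, P⟩ hp
    simp only [mem_filter, mem_Obj] at hp ⊢
    obtain ⟨⟨h, hc⟩, hbU⟩ := hp
    refine ⟨⟨?_, h.ne, ?_, ?_, h.disj, h.nc, ?_⟩, ?_⟩
    · have := h.sub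
      intro x hx
      have := h.sub (mem_of_mem_erase hx)
      grind
    · intro x hx hx'
      exact h.cover x (by simp [hx]) (by grind)
    · intro B hB x hx
      have := h.mem B hB x hx
      grind
    · intro B hB u hu
      exact h.vis B hB u (mem_of_mem_erase hu)
    · rw [card_erase_of_mem hbU, hc]; rfl
  · rintro ⟨U, P⟩ hp
    simp only [mem_filter, mem_Obj] at hp ⊢
    obtain ⟨h, hc⟩ := hp
    have hbU : b ∉ U := fun hh => hbT (h.sub hh)
    refine ⟨⟨⟨?_, h.ne, ?_, ?_, h.disj, h.nc, ?_⟩, ?_⟩, by simp⟩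
    · exact insert_subset_insert _ h.sub
    · intro x hx hx'
      exact h.cover x (by grind) (by grind)
    · intro B hB x hx
      have := h.mem B hB x hx
      grind
    · intro B hB u hu x hx y hy hxu huy
      rcases mem_insert.1 hu with rfl | hu
      · exact lt_asymm hxu (hb x (h.mem B hB x hx).1)
      · exact h.vis B hB u hu x hx y hy hxu huy
    · rw [card_insert_of_notMem hbU, hc]
  · rintro ⟨U, P⟩ hp
    simp only [mem_filter] at hp
    simp [insert_erase hp.2]
  · rintro ⟨U, P⟩ hp
    simp only [mem_Obj] at hp
    have hbU : b ∉ U := fun hh => hbT (hp.1.sub hh)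
    simp [erase_insert hbU]
  · intros; rfl

theorem A_second (l : ℕ) {T : Finset α} {b : α} (hb : ∀ x ∈ T, b < x) (r : ℕ) :
    ∑ p ∈ (Obj (insert b T) r).filter (fun p => b ∉ p.1), wt l p.2 =
      ∑ s ∈ range (T.card + 1), ww l (s + 1) * A l T (r + s) := by
  have hbT : b ∉ T := fun h => lt_irrefl _ (hb b h)
  have hex : ∀ p ∈ (Obj (insert b T) r).filter (fun p => b ∉ p.1), ∃ B ∈ p.2, b ∈ B := by
    intro p hp
    simp only [mem_filter, mem_Obj] at hp
    exact hp.1.1.cover b (by simp) hp.2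
  choose f hf1 hf2 using hex
  unfold A
  simp_rw [mul_sum]
  rw [sum_sigma']
  refine sum_bij (fun p hp => ⟨((f p hp).erase b).card,
    (p.1 ∪ (f p hp).erase b, p.2.erase (f p hp))⟩) ?_ ?_ ?_ ?_
  · intro p hp
    have hB := hf1 p hp
    have hbB := hf2 p hp
    generalize f p hp = B at *
    simp only [mem_filter, mem_Obj] at hp
    simp only [mem_sigma, mem_range, mem_Obj]
    have hg := good_fwd hb hp.1.1 hB hbB
    refine ⟨?_, hg, ?_⟩
    · exact Nat.lt_succ_of_le (card_le_card (subset_union_right.trans hg.sub))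
    · rw [card_union_of_disjoint, hp.1.2]
      rw [disjoint_left]
      intro x hx hx'
      exact (hp.1.1.mem B hB x (mem_of_mem_erase hx')).2 hx
  · intro p hp p' hp' heq
    have hB := hf1 p hp
    have hbB := hf2 p hp
    have hB' := hf1 p' hp'
    have hbB' := hf2 p' hp'
    generalize f p hp = B at *
    generalize f p' hp' = B' at *
    simp only [mem_filter, mem_Obj] at hp hp'
    rw [Sigma.mk.injEq] at heq
    obtain ⟨e1, e2⟩ := heq
    have e2 := eq_of_heq e2
    rw [Prod.mk.injEq] at e2
    obtain ⟨e2, e3⟩ := e2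
    have l1 := good_lt hb hp.1.1 hB hbB
    have l2 := good_lt hb hp'.1.1 hB' hbB'
    obtain ⟨s1, s2⟩ := seg_unique (by rw [union_comm, e2, union_comm]) l1 l2 e1
    have hBB : B = B' := by rw [← insert_erase hbB, s1, insert_erase hbB']
    subst hBB
    ext1
    · exact s2
    · rw [← insert_erase hB, e3, insert_erase hB']
  · rintro ⟨s, U, P⟩ hp
    simp only [mem_sigma, mem_range, mem_Obj] at hp
    obtain ⟨hs, hg, hc⟩ := hp
    obtain ⟨L, R, rfl, hLR, hL⟩ := seg_exists s U (by omega)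
    have hg' := good_bwd hb hg hLR
    have hbL : b ∉ L := fun h => hbT (hg.sub (mem_union_left _ h))
    have hbR : b ∉ R := fun h => hbT (hg.sub (mem_union_right _ h))
    have hdis : Disjoint L R := by
      rw [disjoint_left]
      exact fun x hx hx' => lt_irrefl _ (hLR x hx x hx')
    have hm : (R, insert (insert b L) P) ∈ (Obj (insert b T) r).filter (fun p => b ∉ p.1) := by
      simp only [mem_filter, mem_Obj]
      refine ⟨⟨hg', ?_⟩, hbR⟩
      rw [card_union_of_disjoint hdis] at hc
      omega
    refine ⟨_, hm, ?_⟩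
    have hB := hf1 _ hm
    have hbB := hf2 _ hm
    generalize f _ hm = B at *
    have : B = insert b L := hg'.disj B hB _ (mem_insert_self _ _) b hbB (mem_insert_self _ _)
    subst this
    have hnP : insert b L ∉ P := fun h => hbT (hg.mem _ h b (mem_insert_self _ _)).1
    simp only [erase_insert hbL, erase_insert hnP, hL, union_comm R L]
  · intro p hp
    have hB := hf1 p hp
    have hbB := hf2 p hp
    generalize f p hp = B at *
    simp only
    rw [card_erase_add_one hbB, ← wt_insert l _ _ (by simp), insert_erase hB]

theorem A_zero (l : ℕ) (r : ℕ) : A l (∅ : Finset α) r = if r = 0 then 1 else 0 := by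
  have : Obj (∅ : Finset α) r = if r = 0 then {(∅, ∅)} else ∅ := by
    ext ⟨U, P⟩
    rw [mem_Obj]
    constructor
    · rintro ⟨h, hc⟩
      have hU : U = ∅ := subset_empty.1 h.sub
      have hP : P = ∅ := by
        rw [eq_empty_iff_forall_notMem]
        intro B hB
        obtain ⟨x, hx⟩ := h.ne B hB
        simpa using (h.mem B hB x hx).1
      subst hU hP
      simp at hc
      simp [← hc]
    · intro h
      split_ifs at h with hr
      · simp at h
        obtain ⟨rfl, rfl⟩ := h
        refine ⟨⟨?_, ?_, ?_, ?_, ?_, ?_, ?_⟩, ?_⟩ <;> simp [hr]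
      · simp at h
  unfold A
  rw [this]
  split_ifs <;> simp [wt]

theorem A_rec (l : ℕ) {T : Finset α} {b : α} (hb : ∀ x ∈ T, b < x) (r : ℕ) :
    A l (insert b T) r = (if r = 0 then 0 else A l T (r - 1)) +
      ∑ s ∈ range (T.card + 1), ww l (s + 1) * A l T (r + s) := by
  rw [← A_second l hb]
  conv_lhs => unfold A
  rw [← sum_filter_add_sum_filter_not _ (fun p => b ∈ p.1)]
  congr 1
  cases r with
  | succ r => simp [A_first l hb]
  | zero =>
    simp only [if_true]
    apply sum_eq_zero
    intro p hp
    simp only [mem_filter, mem_Obj] at hp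
    rw [card_eq_zero] at hp
    simp [hp.1.2] at hp

noncomputable def phi (l : ℕ) : PowerSeries (Polynomial ℚ) :=
  PowerSeries.mk fun s => if s = 0 then 1 else ww l s

open PowerSeries in
theorem key {R : Type} [CommRing R] (f : PowerSeries R) (n r : ℕ) :
    ((n : R) + 2) * ∑ s ∈ range (n + 2), ((r : R) + s) * coeff s (f) *
      coeff (n + 1) (X ^ (r + s) * f ^ (n + 1)) =
    ((n : R) + 1) * (r + 1) * coeff (n + 1) (X ^ r * f ^ (n + 2)) := by
  have h1 : ∑ s ∈ range (n + 2), ((r : R) + s) * coeff s (f) *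
      coeff (n + 1) (X ^ (r + s) * f ^ (n + 1)) =
      coeff (n + 1) (((r : PowerSeries R) * f + X * derivative _ (f)) *
        (X ^ r * f ^ (n + 1))) := by
    rw [coeff_mul, Nat.sum_antidiagonal_eq_sum_range_succ_mk]
    refine sum_congr rfl fun s hs => ?_
    have hs' : s ≤ n + 1 := by simp at hs; omega
    congr 1
    · rw [map_add, ← nsmul_eq_mul, map_nsmul, nsmul_eq_mul, add_mul]
      congr 1
      cases s with
      | zero => simp
      | succ s => rw [coeff_succ_X_mul, coeff_derivative]; push_cast; ring
    · rw [pow_add, mul_comm (X ^ r), mul_assoc, coeff_X_pow_mul', if_pos hs']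
  rw [h1]
  set G := X ^ r * f ^ (n + 2) with hG
  have h2 : ((n : PowerSeries R) + 2) *
      (((r : PowerSeries R) * f + X * derivative _ (f)) *
        (X ^ r * f ^ (n + 1))) =
      ((r * (n + 1) : ℕ) : PowerSeries R) * G + X * derivative _ G := by
    rw [hG, Derivation.leibniz, Derivation.leibniz_pow, Derivation.leibniz_pow, derivative_X]
    simp only [smul_eq_mul, nsmul_eq_mul]
    cases r with
    | zero => simp; ring
    | succ r => simp; ring
  have h3 := congrArg (coeff (n + 1)) h2
  rw [map_add, coeff_succ_X_mul, coeff_derivative, ← nsmul_eq_mul (r * (n + 1)), map_nsmul] at h3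
  have h4 : ((n : PowerSeries R) + 2) = ((n + 2 : ℕ) : PowerSeries R) := by
    push_cast; ring
  rw [h4, ← nsmul_eq_mul (n + 2), map_nsmul] at h3
  simp only [nsmul_eq_mul] at h3
  push_cast at h3
  rw [h3]; ring

open PowerSeries in
theorem A_formula (l : ℕ) (T : Finset α) : ∀ r : ℕ, ((T.card : Polynomial ℚ) + 1) * A l T r =
    (r + 1) * coeff T.card (X ^ r * phi l ^ (T.card + 1)) := by
  induction T using Finset.induction_on_min with
  | empty =>
    intro r
    rw [A_zero]
    cases r with
    | zero => simp [phi]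
    | succ r => simp
  | insert b T hb ih =>
    intro r
    have hbT : b ∉ T := fun h => lt_irrefl _ (hb b h)
    rw [card_insert_of_notMem hbT]
    generalize hn : T.card = n at *
    have hne : ((n : Polynomial ℚ) + 1) ≠ 0 := by exact_mod_cast Nat.succ_ne_zero n
    apply mul_left_cancel₀ hne
    have hk := key (phi l) n r
    have : ((n : Polynomial ℚ) + 1) * A l (insert b T) r =
        ∑ s ∈ range (n + 2), ((r : Polynomial ℚ) + s) * coeff s (phi l) *
      coeff (n + 1) (X ^ (r + s) * phi l ^ (n + 1)) := by
      rw [A_rec l hb, sum_range_succ' _ (n + 1), mul_add, mul_sum, hn, add_comm]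
      congr 1
      · refine sum_congr rfl fun s _ => ?_
        rw [mul_left_comm, ih, ← add_assoc r s 1, pow_succ' _ (r + s), mul_assoc X, coeff_succ_X_mul]
        simp [phi]; ring
      · cases r with
        | zero => simp
        | succ r =>
          simp only [Nat.succ_ne_zero, if_false, Nat.add_sub_cancel, ih]
          rw [add_zero, pow_succ' X r, mul_assoc X, coeff_succ_X_mul]
          simp [phi]
    push_cast
    rw [mul_left_comm, this, add_assoc, one_add_one_eq_two, hk]
    ring

open PowerSeries in
theorem coeff_phi (n l : ℕ) (hl : 1 ≤ l) :
    coeff n (phi l ^ (n + 1)) = 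
      ∑ j ∈ (Finset.range (n + 1)).filter (fun j => j * l ≤ n),
        Polynomial.C ((Nat.choose (n + 1) j : ℚ)) * (Polynomial.X - 1) ^ j *
          Polynomial.C ((Nat.choose (2 * n - j * (l + 1)) (n - j) : ℚ)) := by
  have h : phi l = C (Polynomial.X - 1) * X ^ l + PowerSeries.mk 1 := by
    ext1 s
    rw [map_add, coeff_C_mul, coeff_X_pow]
    simp only [phi, coeff_mk, ww, Pi.one_apply]
    split_ifs <;> first | omega | simp
  rw [h, add_pow, map_sum, sum_range_succ, sum_filter]
  have hz : coeff n ((C (Polynomial.X - 1) * X ^ l) ^ (n + 1) * PowerSeries.mk 1 ^ (n + 1 - (n + 1)) * 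
      ((n + 1).choose (n + 1) : PowerSeries (Polynomial ℚ))) = 0 := by
    rw [Nat.choose_self, Nat.sub_self, mul_pow, ← pow_mul, pow_zero, ← map_pow]
    simp only [Nat.cast_one, mul_one]
    rw [coeff_C_mul, coeff_X_pow, if_neg, mul_zero]
    nlinarith
  rw [hz, add_zero]
  refine sum_congr rfl fun j hj => ?_
  have hj' : j ≤ n := by simp at hj; omega
  rw [mul_pow, ← pow_mul, ← map_pow, mul_comm, ← nsmul_eq_mul, map_nsmul, mul_assoc, coeff_C_mul,
    mul_comm l j, coeff_X_pow_mul', show n + 1 - j = (n - j) + 1 by omega,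
    mk_one_pow_eq_mk_choose_add]
  split_ifs with hjl
  · rw [coeff_mk, show 2 * n - j * (l + 1) = n - j + (n - j * l) by rw [mul_add]; omega]
    simp [mul_assoc]
  · simp

theorem sum_NC (n l : ℕ) :
    ∑ k ∈ Finset.range (n + 1), Polynomial.C ((Nblk l n k : ℚ)) * Polynomial.X ^ k =
      A l (univ : Finset (Fin n)) 0 := by
  classical
  have h1 : ∀ P : NCPart n, numBlocksOfSize l P ∈ range (n + 1) := by
    intro P
    have h := P.1.card_parts_le_card
    have h' := card_filter_le P.1.parts (fun B => B.card = l)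
    simp only [numBlocksOfSize, mem_range]
    simp at h
    omega
  have h2 : ∑ P : NCPart n, (Polynomial.X : Polynomial ℚ) ^ numBlocksOfSize l P =
      A l (univ : Finset (Fin n)) 0 := by
    unfold A
    refine sum_bij (fun P _ => (∅, P.1.parts)) ?_ ?_ ?_ ?_
    · intro P _
      rw [mem_Obj]
      refine ⟨⟨by simp, fun B hB => P.1.nonempty_of_mem_parts hB, ?_, by simp, ?_, P.2, by simp⟩, rfl⟩
      · intro x _ _
        exact P.1.exists_mem (mem_univ x)
      · intro B hB B' hB' x hx hx'
        exact P.1.eq_of_mem_parts hB hB' hx hx'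
    · intro P _ Q _ h
      simp only [Prod.mk.injEq, true_and] at h
      exact Subtype.ext (Finpartition.ext h)
    · rintro ⟨U, P⟩ hp
      rw [mem_Obj] at hp
      obtain ⟨h, hc⟩ := hp
      have hU : U = ∅ := card_eq_zero.1 hc
      subst hU
      refine ⟨⟨⟨P, ?_, ?_, ?_⟩, h.nc⟩, mem_univ _, rfl⟩
      · rw [supIndep_iff_pairwiseDisjoint]
        intro B hB C hC hne
        simp only [Function.onFun, id]
        rw [disjoint_left]
        intro x hx hx'
        exact hne (h.disj B hB C hC x hx hx')
      · ext x
        simp only [mem_sup, id, mem_univ, iff_true]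
        exact h.cover x (mem_univ _) (by simp)
      · intro hh
        simpa using h.ne _ hh
    · intro P _
      rfl
  rw [← h2, ← sum_fiberwise_of_maps_to (fun P _ => h1 P)]
  refine sum_congr rfl fun k _ => ?_
  rw [sum_congr rfl (g := fun _ => (Polynomial.X : Polynomial ℚ) ^ k)
    (fun P hP => by rw [(mem_filter.1 hP).2]), sum_const, nsmul_eq_mul]
  congr 1
  rw [Nblk, Nat.card_eq_fintype_card, Fintype.card_subtype]
  simp

end NCProof

/-- For `n ≥ 0` and `l ≥ 1`, as an identity of polynomials in `q` over `ℚ`: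
`(n + 1)·Σ_{k=0}^{n} N^{(l)}_{n,k} q^k
  = Σ_{j≥0, jl ≤ n} binom(n+1, j)·(q − 1)^j·binom(2n − j(l+1), n − j)`
(the Lagrange-inversion formula for `C^{(l)}_n(q)` written out explicitly). -/
theorem lagrange_inversion_blocks (n l : ℕ) (hl : 1 ≤ l) :
    ((n : Polynomial ℚ) + 1) *
        ∑ k ∈ Finset.range (n + 1), Polynomial.C ((Nblk l n k : ℚ)) * Polynomial.X ^ k =
      ∑ j ∈ (Finset.range (n + 1)).filter (fun j => j * l ≤ n),
        Polynomial.C ((Nat.choose (n + 1) j : ℚ)) * (Polynomial.X - 1) ^ j *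
          Polynomial.C ((Nat.choose (2 * n - j * (l + 1)) (n - j) : ℚ)) := by
  have h := NCProof.A_formula l (Finset.univ : Finset (Fin n)) 0
  rw [Finset.card_univ, Fintype.card_fin] at h
  rw [NCProof.sum_NC, h, ← NCProof.coeff_phi n l hl]
  simp
end

section
/- Law of large numbers for the largest block: let L(π) denote the size of the largest block of a non-crossing partition π. Then L_n/log₂ n → 1 in probability as n → ∞; that is, for every ε > 0, the proportion (1/C_n)·#{π ∈ NC(n) : |L(π)/log₂ n − 1| > ε} tends to 0 as n → ∞ (here log₂ denotes the base-2 logarithm and n ≥ 2). -/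
open Filter

/-- The size of the largest block of a non-crossing partition. -/
def maxBlockSize {n : ℕ} (P : NCPart n) : ℕ := P.1.parts.sup Finset.card


namespace NCLLN
open Finset

/-- value of the minimum of the block containing `j` -/
noncomputable def mnv {n : ℕ} (P : NCPart n) (j : Fin n) : ℕ :=
  ((P.1.part j).min' ⟨j, P.1.mem_part_self.2 (mem_univ j)⟩).val

lemma mnv_le {n : ℕ} (P : NCPart n) (j : Fin n) : mnv P j ≤ j.val := by
  have : (P.1.part j).min' ⟨j, P.1.mem_part_self.2 (mem_univ j)⟩ ≤ j :=
    Finset.min'_le _ _ (P.1.mem_part_self.2 (mem_univ j))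
  exact this

lemma mnv_exists {n : ℕ} (P : NCPart n) (j : Fin n) :
    ∃ m : Fin n, m.val = mnv P j ∧ P.1.part m = P.1.part j := by
  refine ⟨(P.1.part j).min' ⟨j, P.1.mem_part_self.2 (mem_univ j)⟩, rfl, ?_⟩
  apply P.1.part_eq_of_mem (P.1.part_mem.2 (mem_univ j))
  exact Finset.min'_mem _ _

lemma mnv_eq_iff {n : ℕ} (P : NCPart n) (a b : Fin n) :
    mnv P a = mnv P b ↔ P.1.part a = P.1.part b := by
  constructor
  · intro h
    obtain ⟨m, hm, hm'⟩ := mnv_exists P a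
    obtain ⟨k, hk, hk'⟩ := mnv_exists P b
    have : m = k := Fin.ext (by omega)
    rw [← hm', ← hk', this]
  · intro h
    unfold mnv
    simp only [h]

lemma mnv_nc {n : ℕ} (P : NCPart n) (a b c d : Fin n) (hab : a < b) (hbc : b < c) (hcd : c < d)
    (h1 : mnv P a = mnv P c) (h2 : mnv P b = mnv P d) : mnv P a = mnv P b := by
  rw [mnv_eq_iff] at *
  have hs : ∀ x, x ∈ P.1.part x := fun x => P.1.mem_part_self.2 (mem_univ x)
  have hp : ∀ x, P.1.part x ∈ P.1.parts := fun x => P.1.part_mem.2 (mem_univ x)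
  exact P.2 a b c d hab hbc hcd _ (hp a) _ (hp b) (hs a) (h1 ▸ hs c) (hs b) (h2 ▸ hs d)

/-- block size if `i` is the minimum of a block, zero otherwise -/
noncomputable def enc {n : ℕ} (P : NCPart n) (i : ℕ) : ℕ :=
  (univ.filter fun j : Fin n => mnv P j = i).card

lemma sum_enc {n : ℕ} (P : NCPart n) (k : ℕ) :
    ∑ i ∈ range k, enc P i = (univ.filter fun j : Fin n => mnv P j < k).card := by
  rw [card_eq_sum_card_fiberwise (f := mnv P) (t := range k)]
  · apply sum_congr rfl
    intro i hi
    unfold enc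
    congr 1
    ext j
    simp only [mem_filter, mem_univ, true_and, mem_range] at *
    omega
  · intro j hj
    simpa using hj

lemma sum_enc_all {n : ℕ} (P : NCPart n) : ∑ i ∈ range n, enc P i = n := by
  rw [sum_enc, filter_true_of_mem]
  · simp
  · intro j _
    exact lt_of_le_of_lt (mnv_le P j) j.2

lemma enc_eq_zero {n : ℕ} (P : NCPart n) {i : ℕ} (hi : n ≤ i) : enc P i = 0 := by
  unfold enc
  rw [card_eq_zero, filter_eq_empty_iff]
  intro j _
  have := mnv_le P j
  omega

lemma le_sum_enc {n : ℕ} (P : NCPart n) (k : ℕ) (hk : k ≤ n) : k ≤ ∑ i ∈ range k, enc P i := by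
  rw [sum_enc]
  have : (univ.filter fun j : Fin n => j.val < k).card = k := by
    rw [Fin.card_filter_val_lt]; omega
  refine this.symm.le.trans ?_
  apply card_le_card
  intro j
  simp only [mem_filter, mem_univ, true_and]
  have := mnv_le P j
  omega

lemma enc_eq_card {n : ℕ} (P : NCPart n) (j : Fin n) : enc P (mnv P j) = (P.1.part j).card := by
  unfold enc
  congr 1
  ext x
  simp only [mem_filter, mem_univ, true_and]
  rw [mnv_eq_iff, ← P.1.mem_part_iff_part_eq_part (mem_univ _) (mem_univ _)]

lemma enc_le_max {n : ℕ} (P : NCPart n) (i : ℕ) : enc P i ≤ maxBlockSize P := by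
  by_cases h : enc P i = 0
  · omega
  · have : 0 < enc P i := Nat.pos_of_ne_zero h
    unfold enc at this
    rw [card_pos] at this
    obtain ⟨j, hj⟩ := this
    simp only [mem_filter, mem_univ, true_and] at hj
    rw [← hj, enc_eq_card]
    exact Finset.le_sup (f := Finset.card) (P.1.part_mem.2 (mem_univ j))

lemma exists_enc_eq_max {n : ℕ} (P : NCPart n) (hn : 0 < n) :
    ∃ i, i < n ∧ enc P i = maxBlockSize P := by
  have hne : P.1.parts.Nonempty := ⟨_, P.1.part_mem.2 (mem_univ (⟨0, hn⟩ : Fin n))⟩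
  obtain ⟨B, hB, hB'⟩ := Finset.exists_mem_eq_sup P.1.parts hne Finset.card
  obtain ⟨j, hj⟩ := P.1.nonempty_of_mem_parts hB
  refine ⟨mnv P j, lt_of_le_of_lt (mnv_le P j) j.2, ?_⟩
  rw [enc_eq_card, P.1.part_eq_of_mem hB hj]
  exact hB'.symm

/-- the greedy description of `mnv` -/
lemma mnv_greedy {n : ℕ} (P : NCPart n) (j : Fin n) :
    mnv P j = Nat.findGreatest
      (fun i => (univ.filter fun x : Fin n => x < j ∧ mnv P x = i).card < enc P i) j.val := by
  symm
  rw [Nat.findGreatest_eq_iff]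
  refine ⟨mnv_le P j, fun _ => ?_, ?_⟩
  · unfold enc
    apply card_lt_card
    rw [Finset.ssubset_iff_of_subset]
    · exact ⟨j, by simp, by simp⟩
    · intro x
      simp
  · intro i hi hij hlt
    have : ∃ x : Fin n, j ≤ x ∧ mnv P x = i := by
      by_contra hcon
      push Not at hcon
      apply hlt.not_ge
      unfold enc
      apply card_le_card
      intro x
      simp only [mem_filter, mem_univ, true_and]
      intro hx
      refine ⟨?_, hx⟩
      by_contra h
      exact hcon x (not_lt.1 h) hx
    obtain ⟨x, hjx, hx⟩ := this
    obtain ⟨m, hm, hm'⟩ := mnv_exists P j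
    obtain ⟨k, hk, hk'⟩ := mnv_exists P x
    have hjx' : j ≠ x := by
      rintro rfl
      omega
    rw [← mnv_eq_iff] at hm' hk'
    have hkj : k ≠ j := by
      rintro rfl
      omega
    have := mnv_nc P m k j x (by rw [Fin.lt_def]; omega)
      (lt_of_le_of_ne (by rw [Fin.le_def]; omega) hkj) (lt_of_le_of_ne hjx hjx') hm' hk'
    omega

lemma enc_injective {n : ℕ} (P Q : NCPart n) (h : ∀ i, i < n → enc P i = enc Q i) : P = Q := by
  have he : ∀ i, enc P i = enc Q i := by
    intro i
    by_cases hi : i < n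
    · exact h i hi
    · rw [enc_eq_zero P (not_lt.1 hi), enc_eq_zero Q (not_lt.1 hi)]
  have key : ∀ j : Fin n, mnv P j = mnv Q j := by
    intro j
    induction j using WellFoundedLT.induction with
    | ind j ih =>
      rw [mnv_greedy P j, mnv_greedy Q j]
      have : (fun i => (univ.filter fun x : Fin n => x < j ∧ mnv P x = i).card < enc P i) =
          (fun i => (univ.filter fun x : Fin n => x < j ∧ mnv Q x = i).card < enc Q i) := by
        funext i
        rw [he i]
        congr 3
        ext x
        constructor
        · rintro ⟨h1, h2⟩
          exact ⟨h1, by rw [← ih x h1]; exact h2⟩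
        · rintro ⟨h1, h2⟩
          exact ⟨h1, by rw [ih x h1]; exact h2⟩
      simp only [this]
  apply Subtype.ext
  have hpart : ∀ j, P.1.part j = Q.1.part j := by
    intro j
    ext x
    rw [P.1.mem_part_iff_part_eq_part (mem_univ _) (mem_univ _),
      Q.1.mem_part_iff_part_eq_part (mem_univ _) (mem_univ _), ← mnv_eq_iff, ← mnv_eq_iff,
      key, key]
  have hsub : ∀ (P Q : NCPart n), (∀ j, P.1.part j = Q.1.part j) → P.1.parts ⊆ Q.1.parts := by
    intro P Q h B hB
    obtain ⟨j, hj⟩ := P.1.nonempty_of_mem_parts hB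
    rw [← P.1.part_eq_of_mem hB hj, h j]
    exact Q.1.part_mem.2 (mem_univ j)
  exact Finpartition.ext (subset_antisymm (hsub P Q hpart) (hsub Q P fun j => (hpart j).symm))

/-- greedy decoding -/
def dec (s : ℕ → ℕ) : ℕ → ℕ
  | j => Nat.findGreatest
      (fun i => ((range j).attach.filter fun x => dec s x.1 = i).card < s i) j
  termination_by j => j
  decreasing_by all_goals exact mem_range.1 (Subtype.property _)

lemma dec_eq (s : ℕ → ℕ) (j : ℕ) : dec s j = Nat.findGreatest
      (fun i => ((range j).filter fun x => dec s x = i).card < s i) j := by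
  have : ∀ i, ((range j).attach.filter fun x => dec s x.1 = i).card =
      ((range j).filter fun x => dec s x = i).card := by
    intro i
    rw [← Finset.card_map (Function.Embedding.subtype _)]
    congr 1
    ext x
    simp [and_comm]
  rw [dec]
  simp only [this]

lemma dec_le (s : ℕ → ℕ) (j : ℕ) : dec s j ≤ j := by
  rw [dec_eq]; exact Nat.findGreatest_le _

lemma dec_spec (s : ℕ → ℕ) (j : ℕ) (h : j < ∑ i ∈ range (j + 1), s i) :
    ((range j).filter fun x => dec s x = dec s j).card < s (dec s j) := by
  have : ∃ i ≤ j, ((range j).filter fun x => dec s x = i).card < s i := by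
    by_contra hcon
    push Not at hcon
    have h1 : ∑ i ∈ range (j + 1), s i ≤
        ∑ i ∈ range (j + 1), ((range j).filter fun x => dec s x = i).card :=
      sum_le_sum fun i hi => hcon i (by simpa [Nat.lt_succ_iff] using hi)
    rw [← card_eq_sum_card_fiberwise (f := dec s) (s := range j) (t := range (j + 1))] at h1
    · rw [card_range] at h1
      omega
    · intro x hx
      have := dec_le s x
      simp at *
      omega
  obtain ⟨i, hi, hi'⟩ := this
  have := Nat.findGreatest_spec
    (P := fun i => ((range j).filter fun x => dec s x = i).card < s i) hi hi'
  rw [← dec_eq] at this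
  exact this

lemma dec_max (s : ℕ → ℕ) (j i : ℕ) (hi : i ≤ j)
    (h : ((range j).filter fun x => dec s x = i).card < s i) : i ≤ dec s j := by
  rw [dec_eq]
  exact Nat.le_findGreatest hi h

lemma dec_count_le (s : ℕ → ℕ) (k : ℕ) (h : ∀ j < k, j < ∑ i ∈ range (j + 1), s i) (i : ℕ) :
    ((range k).filter fun x => dec s x = i).card ≤ s i := by
  induction k with
  | zero => simp
  | succ k ih =>
    rw [range_add_one, filter_insert]
    split_ifs with hk
    · rw [card_insert_of_notMem (by simp)]
      have := dec_spec s k (h k (by omega))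
      rw [hk] at this
      omega
    · exact ih fun j hj => h j (by omega)

lemma dec_self (s : ℕ → ℕ) (i : ℕ) (h : 0 < s i) : dec s i = i := by
  apply le_antisymm (dec_le s i)
  apply dec_max s i i le_rfl
  rw [card_eq_zero.2]
  · exact h
  · rw [filter_eq_empty_iff]
    intro x hx
    have := dec_le s x
    simp at hx
    omega

lemma dec_count (s : ℕ → ℕ) (n : ℕ) (h : ∀ j < n, j < ∑ i ∈ range (j + 1), s i)
    (hs : ∑ i ∈ range n, s i = n) (i : ℕ) (hi : i < n) :
    ((range n).filter fun x => dec s x = i).card = s i := by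
  have h1 : ∑ i ∈ range n, ((range n).filter fun x => dec s x = i).card = ∑ i ∈ range n, s i := by
    rw [← card_eq_sum_card_fiberwise (f := dec s) (s := range n) (t := range n), hs, card_range]
    intro x hx
    have := dec_le s x
    simp at *
    omega
  exact (sum_eq_sum_iff_of_le (fun i _ => dec_count_le s n h i)).1 h1 i (mem_range.2 hi)

lemma dec_cand (s : ℕ → ℕ) (n : ℕ) (h : ∀ j < n, j < ∑ i ∈ range (j + 1), s i)
    (j d : ℕ) (hd : d < n) (hjd : j < d) (hij : dec s d ≤ j) : dec s d ≤ dec s j := by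
  apply dec_max s j _ hij
  refine lt_of_le_of_lt (card_le_card ?_) (dec_spec s d (h d hd))
  intro x
  simp only [mem_filter, mem_range]
  rintro ⟨h1, h2⟩
  exact ⟨by omega, h2⟩

lemma dec_nc (s : ℕ → ℕ) (n : ℕ) (h : ∀ j < n, j < ∑ i ∈ range (j + 1), s i)
    (a b c d : ℕ) (hab : a < b) (hbc : b < c) (hcd : c < d) (hd : d < n)
    (h1 : dec s a = dec s c) (h2 : dec s b = dec s d) : dec s a = dec s b := by
  have ha := dec_le s a
  have hb := dec_le s b
  have e1 := dec_cand s n h c d hd hcd (by omega)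
  have e2 := dec_cand s n h b c (by omega) hbc (by omega)
  omega

lemma enc_surjective (n : ℕ) (s : ℕ → ℕ) (h : ∀ j < n, j < ∑ i ∈ range (j + 1), s i)
    (hs : ∑ i ∈ range n, s i = n) : ∃ P : NCPart n, ∀ i < n, enc P i = s i := by
  classical
  let R : Setoid (Fin n) := Setoid.ker fun j : Fin n => dec s j.val
  let P0 := Finpartition.ofSetoid R
  have hmem : ∀ a b : Fin n, b ∈ P0.part a ↔ dec s a.val = dec s b.val := by
    intro a b
    exact Finpartition.mem_part_ofSetoid_iff_rel
  have hnc : IsNonCrossing P0 := by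
    intro a b c d hab hbc hcd B hB B' hB' ha hc hb hd
    rw [← P0.part_eq_of_mem hB ha] at hc ⊢
    rw [← P0.part_eq_of_mem hB' hb] at hd ⊢
    rw [hmem] at hc hd
    have := dec_nc s n h a b c d hab hbc hcd d.2 hc hd
    rw [← hmem] at this
    exact ((P0.mem_part_iff_part_eq_part (mem_univ _) (mem_univ _)).1 this).symm
  let P : NCPart n := ⟨P0, hnc⟩
  have hP : ∀ j, mnv P j = dec s j.val := by
    intro j
    obtain ⟨m, hm, hm'⟩ := mnv_exists P j
    have hmj : dec s m = dec s j := by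
      rw [← hmem]
      exact hm' ▸ P0.mem_part_self.2 (mem_univ j)
    rw [← hm]
    apply le_antisymm
    · have hlt : dec s j < n := lt_of_le_of_lt (dec_le s j) j.2
      have : mnv P j ≤ mnv P ⟨dec s j, hlt⟩ := by
        apply le_of_eq
        rw [mnv_eq_iff]
        refine ((P0.mem_part_iff_part_eq_part (mem_univ _) (mem_univ _)).1 ?_)
        rw [hmem]
        exact dec_self s _ (lt_of_le_of_lt (Nat.zero_le _) (dec_spec s j (h j j.2)))
      rw [hm]
      exact this.trans (mnv_le P _)
    · rw [← hmj]; exact dec_le s m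
  refine ⟨P, fun i hi => ?_⟩
  rw [← dec_count s n h hs i hi]
  unfold enc
  simp only [hP]
  rw [← Finset.card_map Fin.valEmbedding]
  congr 1
  ext x
  simp only [Finset.mem_map, mem_filter, mem_univ, true_and, Fin.valEmbedding_apply, mem_range]
  constructor
  · rintro ⟨a, h1, rfl⟩
    exact ⟨a.2, h1⟩
  · rintro ⟨h1, h2⟩
    exact ⟨⟨x, h1⟩, h2, rfl⟩

/-! ### Cycle lemma -/

lemma sum_zmod (n : ℕ) (x : ZMod (n + 1) → ℕ) :
    ∑ z, x z = ∑ j ∈ range (n + 1), x (j : ZMod (n + 1)) := by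
  have h := Fin.sum_univ_eq_sum_range (fun j => x (j : ZMod (n + 1))) (n + 1)
  rw [← h]
  refine Finset.sum_congr rfl fun z _ => ?_
  congr 1
  exact (ZMod.natCast_zmod_val (n := n + 1) z).symm

def Luk (n : ℕ) (x : ZMod (n + 1) → ℕ) : Prop :=
  ∀ k ≤ n, k ≤ ∑ j ∈ range k, x (j : ZMod (n + 1))

lemma luk_exists (n : ℕ) (x : ZMod (n + 1) → ℕ) (hx : ∑ z, x z = n) :
    ∃ r : ZMod (n + 1), Luk n fun z => x (z + r) := by
  rw [sum_zmod] at hx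
  set y : ℕ → ℕ := fun j => x (j : ZMod (n + 1)) with hy
  let S : ℕ → ℕ := fun k => ∑ j ∈ range k, y j
  have hSadd : ∀ a b, S (a + b) = S a + ∑ j ∈ range b, y (a + j) := fun a b =>
    Finset.sum_range_add y a b
  have hper : ∀ k, S (k + (n + 1)) = S k + n := by
    intro k
    rw [add_comm, hSadd, add_comm]
    have h1 : S (n + 1) = n := hx
    rw [h1]
    congr 1
    apply Finset.sum_congr rfl
    intro j _
    simp only [hy]
    congr 1
    have := ZMod.natCast_self (n + 1)
    push_cast at this ⊢
    rw [this, zero_add]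
  let V : ℕ → ℤ := fun k => ((n : ℤ) + 1) * S k - n * k
  have hV : Function.Periodic V (n + 1) := by
    intro k
    simp only [V, hper]
    push_cast
    ring
  obtain ⟨r, hr, hmin⟩ := Finset.exists_min_image (range (n + 1)) V ⟨0, by simp⟩
  have hmin' : ∀ k, V r ≤ V k := by
    intro k
    rw [← hV.map_mod_nat k]
    exact hmin _ (mem_range.2 (Nat.mod_lt _ (Nat.succ_pos n)))
  refine ⟨(r : ZMod (n + 1)), fun k hk => ?_⟩
  have h1 := hmin' (r + k)
  have h2 : ∑ j ∈ range k, x ((j : ZMod (n + 1)) + r) = ∑ j ∈ range k, y (r + j) := by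
    apply Finset.sum_congr rfl
    intro j _
    simp only [hy]
    congr 1
    push_cast
    ring
  rw [h2]
  simp only [V, hSadd] at h1
  set T := ∑ j ∈ range k, y (r + j)
  push_cast at h1
  by_contra hcon
  push Not at hcon
  have h3 : (T : ℤ) + 1 ≤ k := by exact_mod_cast hcon
  have h4 : (k : ℤ) ≤ n := by exact_mod_cast hk
  have h5 : ((n : ℤ) + 1) * T - n * k ≥ 0 := by linarith
  nlinarith

lemma luk_unique (n : ℕ) (x : ZMod (n + 1) → ℕ) (hx : ∑ z, x z = n) (d : ZMod (n + 1))
    (h1 : Luk n x) (h2 : Luk n fun z => x (z + d)) : d = 0 := by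
  by_contra hd
  have hpos : 0 < d.val := Nat.pos_of_ne_zero fun h => hd ((ZMod.val_eq_zero d).1 h)
  have hlt : d.val < n + 1 := ZMod.val_lt d
  have e1 := h1 d.val (by omega)
  have e2 := h2 (n + 1 - d.val) (by omega)
  rw [sum_zmod] at hx
  have h3 := Finset.sum_range_add (fun j => x (j : ZMod (n + 1))) d.val (n + 1 - d.val)
  rw [Nat.add_sub_cancel' hlt.le, hx] at h3
  have h4 : ∑ j ∈ range (n + 1 - d.val), x ((j : ZMod (n + 1)) + d) =
      ∑ j ∈ range (n + 1 - d.val), x ((d.val + j : ℕ) : ZMod (n + 1)) := by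
    apply Finset.sum_congr rfl
    intro j _
    congr 1
    push_cast
    rw [ZMod.natCast_zmod_val]
    exact add_comm (j : ZMod (n + 1)) d
  rw [h4] at e2
  omega

noncomputable def encZ {n : ℕ} (P : NCPart n) : ZMod (n + 1) → ℕ := fun z => enc P z.val

lemma encZ_cast {n : ℕ} (P : NCPart n) (j : ℕ) (hj : j ≤ n) :
    encZ P (j : ZMod (n + 1)) = enc P j := by
  unfold encZ
  rw [ZMod.val_cast_of_lt (by omega)]

lemma encZ_sum {n : ℕ} (P : NCPart n) : ∑ z, encZ P z = n := by
  rw [sum_zmod, sum_congr rfl (g := enc P), sum_range_succ, sum_enc_all, enc_eq_zero P le_rfl]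
  · rfl
  · intro j hj
    exact encZ_cast P j (by simpa [Nat.lt_succ_iff] using hj)

lemma encZ_luk {n : ℕ} (P : NCPart n) : Luk n (encZ P) := by
  intro k hk
  rw [sum_congr rfl (g := enc P)]
  · exact le_sum_enc P k hk
  · intro j hj
    rw [mem_range] at hj
    exact encZ_cast P j (by omega)

lemma encZ_injective {n : ℕ} (P Q : NCPart n) (h : encZ P = encZ Q) : P = Q := by
  apply enc_injective
  intro i hi
  rw [← encZ_cast P i hi.le, ← encZ_cast Q i hi.le, h]

lemma encZ_surjective {n : ℕ} (x : ZMod (n + 1) → ℕ) (hx : ∑ z, x z = n) (h : Luk n x) :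
    ∃ P : NCPart n, encZ P = x := by
  rw [sum_zmod, sum_range_succ] at hx
  have hn := h n le_rfl
  have hsum : ∑ j ∈ range n, x (j : ZMod (n + 1)) = n := by omega
  have hlast : x (n : ZMod (n + 1)) = 0 := by omega
  obtain ⟨P, hP⟩ := enc_surjective n (fun j => x (j : ZMod (n + 1)))
    (fun j hj => by have := h (j + 1) hj; omega) hsum
  refine ⟨P, ?_⟩
  funext z
  have hz : z.val < n + 1 := ZMod.val_lt z
  have hz' : ((z.val : ℕ) : ZMod (n + 1)) = z := ZMod.natCast_zmod_val z
  unfold encZ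
  rcases Nat.lt_succ_iff_lt_or_eq.1 hz with h1 | h1
  · rw [hP _ h1, hz']
  · rw [enc_eq_zero P h1.ge, ← hz', h1, hlast]

/-- compositions of `n` into `n+1` nonnegative parts -/
def U (n m : ℕ) : Finset (ZMod (n + 1) → ℕ) := piAntidiag univ m

lemma mem_U {n m : ℕ} {x : ZMod (n + 1) → ℕ} : x ∈ U n m ↔ ∑ z, x z = m := by
  simp [U]

lemma card_U (n m : ℕ) : (U n m).card = (n + m).choose m := by
  have h := Finset.card_finsuppAntidiag_nat_eq_choose (s := (univ : Finset (ZMod (n + 1)))) m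
  rw [Finset.card_univ, ZMod.card] at h
  rw [show n + m = n + 1 + m - 1 by omega, ← h]
  unfold U Finset.finsuppAntidiag
  rw [Finset.card_map, Finset.card_attach]

lemma rot_sum {n : ℕ} (x : ZMod (n + 1) → ℕ) (r : ZMod (n + 1)) :
    ∑ z, x (z + r) = ∑ z, x z :=
  Equiv.sum_comp (Equiv.addRight r) x

lemma card_le_comp (n : ℕ) (q : NCPart n → Prop) (Q : (ZMod (n + 1) → ℕ) → Prop)
    [DecidablePred Q] (h : ∀ P, q P → ∀ r, Q fun z => encZ P (z + r)) :
    (n + 1) * Nat.card {P : NCPart n // q P} ≤ ((U n n).filter Q).card := by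
  have h1 : (n + 1) * Nat.card {P : NCPart n // q P} =
      Nat.card (ZMod (n + 1) × {P : NCPart n // q P}) := by
    rw [Nat.card_prod, Nat.card_zmod]
  rw [h1, ← Nat.card_eq_finsetCard]
  have hm : ∀ p : ZMod (n + 1) × {P : NCPart n // q P},
      (fun z => encZ p.2.1 (z + p.1)) ∈ (U n n).filter Q := by
    intro p
    rw [mem_filter, mem_U, rot_sum, encZ_sum]
    exact ⟨rfl, h _ p.2.2 _⟩
  apply Nat.card_le_card_of_injective
    (fun p : ZMod (n + 1) × {P : NCPart n // q P} =>
      (⟨fun z => encZ p.2.1 (z + p.1), hm p⟩ : {x // x ∈ (U n n).filter Q}))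
  rintro ⟨r, P, hP⟩ ⟨r', P', hP'⟩ heq
  have heq' : (fun z => encZ P (z + r)) = fun z => encZ P' (z + r') := congrArg Subtype.val heq
  have e : encZ P' = fun z => encZ P (z + (r - r')) := by
    funext z
    have := congrFun heq' (z - r')
    simp only [sub_add_cancel] at this
    rw [← this]
    congr 1
    ring
  have e0 := luk_unique n (encZ P) (encZ_sum P) (r - r') (encZ_luk P) (e ▸ encZ_luk P')
  rw [e0] at e
  simp only [add_zero] at e
  have : P = P' := encZ_injective _ _ e.symm
  subst this
  rw [sub_eq_zero.1 e0]

lemma comp_le_card (n : ℕ) : (U n n).card ≤ (n + 1) * Fintype.card (NCPart n) := by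
  classical
  have h1 : (n + 1) * Fintype.card (NCPart n) = Fintype.card (ZMod (n + 1) × NCPart n) := by
    rw [Fintype.card_prod, ZMod.card]
  rw [h1, ← Finset.card_univ]
  refine (card_le_card ?_).trans
    (card_image_le (s := univ) (f := fun p : ZMod (n + 1) × NCPart n => fun z => encZ p.2 (z + p.1)))
  intro x hx
  rw [mem_U] at hx
  obtain ⟨r, hr⟩ := luk_exists n x hx
  obtain ⟨P, hP⟩ := encZ_surjective (fun z => x (z + r)) (by rw [rot_sum, hx]) hr
  rw [mem_image]
  refine ⟨(-r, P), mem_univ _, ?_⟩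
  funext z
  simp [hP]

/-! ### Counting -/

lemma card_U_succ (n m : ℕ) (h : m + 1 ≤ n) : 2 * (U n m).card ≤ (U n (m + 1)).card := by
  rw [card_U, card_U]
  have := Nat.add_one_mul_choose_eq (n + m) m
  have h2 : 2 * (m + 1) * (n + m).choose m ≤ (n + m + 1) * (n + m).choose m :=
    Nat.mul_le_mul_right _ (by omega)
  rw [this] at h2
  apply Nat.le_of_mul_le_mul_right (c := m + 1) _ (Nat.succ_pos m)
  rw [← add_assoc]
  refine le_trans (le_of_eq ?_) h2
  ring

lemma card_U_pow (n k : ℕ) (h : k ≤ n) : 2 ^ k * (U n (n - k)).card ≤ (U n n).card := by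
  induction k with
  | zero => simp
  | succ k ih =>
    have h1 := card_U_succ n (n - (k + 1)) (by omega)
    rw [show n - (k + 1) + 1 = n - k by omega] at h1
    calc 2 ^ (k + 1) * (U n (n - (k + 1))).card = 2 ^ k * (2 * (U n (n - (k + 1))).card) := by ring
      _ ≤ 2 ^ k * (U n (n - k)).card := Nat.mul_le_mul_left _ h1
      _ ≤ _ := ih (by omega)

lemma upper_count (n k : ℕ) :
    2 ^ k * ((U n n).filter fun x => ∃ i, k ≤ x i).card ≤ (n + 1) * (U n n).card := by
  classical
  by_cases hk : k ≤ n
  · have h1 : ((U n n).filter fun x => ∃ i, k ≤ x i).card ≤ (n + 1) * (U n (n - k)).card := by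
      have hsub : ((U n n).filter fun x => ∃ i, k ≤ x i) ⊆
          (univ : Finset (ZMod (n + 1))).biUnion fun i =>
            (U n (n - k)).image fun y => y + Pi.single i k := by
        intro x hx
        rw [mem_filter, mem_U] at hx
        obtain ⟨hs, i, hi⟩ := hx
        rw [mem_biUnion]
        refine ⟨i, mem_univ i, ?_⟩
        rw [mem_image]
        have hx : (x - Pi.single i k) + Pi.single i k = x := by
          funext z
          by_cases hz : z = i
          · subst hz; simp [hi]
          · simp [hz]
        refine ⟨x - Pi.single i k, ?_, hx⟩
        rw [mem_U]
        have h2 : ∑ z, ((x - Pi.single i k) + Pi.single i k : ZMod (n + 1) → ℕ) z = n := by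
          rw [hx]; exact hs
        simp only [Pi.add_apply] at h2
        rw [sum_add_distrib, Finset.sum_pi_single'] at h2
        simp only [mem_univ, if_true] at h2
        omega
      refine (card_le_card hsub).trans (card_biUnion_le.trans ?_)
      refine (sum_le_sum fun i _ => card_image_le).trans ?_
      rw [sum_const, Finset.card_univ, ZMod.card, smul_eq_mul]
    calc _ ≤ 2 ^ k * ((n + 1) * (U n (n - k)).card) := Nat.mul_le_mul_left _ h1
      _ = (n + 1) * (2 ^ k * (U n (n - k)).card) := by ring
      _ ≤ _ := Nat.mul_le_mul_left _ (card_U_pow n k hk)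
  · rw [Finset.filter_false_of_mem]
    · simp
    · rintro x hx ⟨i, hi⟩
      rw [mem_U] at hx
      have := single_le_sum (f := x) (fun _ _ => Nat.zero_le _) (mem_univ i)
      omega

lemma lower_count (n k : ℕ) :
    (((U n n).filter fun x => ∀ i, x i < k).card : ℝ) ≤
      2 * 4 ^ n * (1 - (1 / 2 : ℝ) ^ k) ^ (n + 1) := by
  classical
  have h1 : ∑ x ∈ (U n n).filter (fun x => ∀ i, x i < k), ∏ i, (1 / 2 : ℝ) ^ x i =
      (((U n n).filter fun x => ∀ i, x i < k).card : ℝ) * (1 / 2) ^ n := by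
    rw [sum_congr rfl (g := fun _ => (1 / 2 : ℝ) ^ n), sum_const, nsmul_eq_mul]
    intro x hx
    rw [mem_filter, mem_U] at hx
    rw [prod_pow_eq_pow_sum, hx.1]
  have h2 : ∑ x ∈ (U n n).filter (fun x => ∀ i, x i < k), ∏ i, (1 / 2 : ℝ) ^ x i ≤
      ∑ x ∈ Fintype.piFinset (fun _ : ZMod (n + 1) => range k), ∏ i, (1 / 2 : ℝ) ^ x i := by
    apply sum_le_sum_of_subset_of_nonneg
    · intro x hx
      rw [mem_filter] at hx
      rw [Fintype.mem_piFinset]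
      intro i
      exact mem_range.2 (hx.2 i)
    · intro x _ _
      positivity
  rw [← Finset.prod_univ_sum (fun _ : ZMod (n + 1) => range k) (fun _ j => (1 / 2 : ℝ) ^ j)] at h2
  rw [h1, prod_const, Finset.card_univ, ZMod.card, geom_sum_eq (by norm_num)] at h2
  have h3 : ((1 / 2 : ℝ) ^ k - 1) / (1 / 2 - 1) = 2 * (1 - (1 / 2 : ℝ) ^ k) := by ring
  rw [h3, mul_pow] at h2
  have h4 : (2 : ℝ) ^ n * (1 / 2) ^ n = 1 := by rw [← mul_pow]; norm_num
  have h5 : (4 : ℝ) ^ n = 2 ^ n * 2 ^ n := by rw [← mul_pow]; norm_num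
  calc (((U n n).filter fun x => ∀ i, x i < k).card : ℝ)
      = 2 ^ n * ((((U n n).filter fun x => ∀ i, x i < k).card : ℝ) * (1 / 2) ^ n) := by
        rw [mul_comm, mul_assoc, mul_comm _ ((2 : ℝ) ^ n), h4, mul_one]
    _ ≤ 2 ^ n * (2 ^ (n + 1) * (1 - (1 / 2 : ℝ) ^ k) ^ (n + 1)) := by gcongr
    _ = _ := by rw [h5]; ring

lemma card_pos' (n : ℕ) : 0 < Fintype.card (NCPart n) := by
  have h := comp_le_card n
  rw [card_U] at h
  have : 0 < (n + n).choose n := Nat.choose_pos (by omega)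
  by_contra hc
  have : Fintype.card (NCPart n) = 0 := by omega
  rw [this] at h
  omega

lemma upper_prob (n k : ℕ) (hn : 0 < n) :
    (Nat.card {P : NCPart n // k ≤ maxBlockSize P} : ℝ) / Fintype.card (NCPart n) ≤
      (n + 1) / 2 ^ k := by
  have h1 := card_le_comp n (fun P => k ≤ maxBlockSize P) (fun x => ∃ i, k ≤ x i) (by
    intro P hP r
    obtain ⟨i, hi, hi'⟩ := exists_enc_eq_max P hn
    refine ⟨(i : ZMod (n + 1)) - r, ?_⟩
    beta_reduce
    rw [sub_add_cancel, encZ_cast P i hi.le, hi']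
    exact hP)
  have h2 := upper_count n k
  have h3 := comp_le_card n
  have hN := card_pos' n
  set c := Nat.card {P : NCPart n // k ≤ maxBlockSize P}
  have h4 : (n + 1) * (c * 2 ^ k) ≤ (n + 1) * ((n + 1) * Fintype.card (NCPart n)) := by
    calc (n + 1) * (c * 2 ^ k) = 2 ^ k * ((n + 1) * c) := by ring
      _ ≤ _ := Nat.mul_le_mul_left _ h1
      _ ≤ _ := h2
      _ ≤ _ := Nat.mul_le_mul_left _ h3
  have h5 := Nat.le_of_mul_le_mul_left h4 (Nat.succ_pos n)
  rw [div_le_div_iff₀ (by exact_mod_cast hN) (by positivity)]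
  exact_mod_cast h5

lemma lower_prob (n k : ℕ) (hn : 0 < n) :
    (Nat.card {P : NCPart n // maxBlockSize P < k} : ℝ) / Fintype.card (NCPart n) ≤
      4 * n * (1 - (1 / 2 : ℝ) ^ k) ^ (n + 1) := by
  have h1 := card_le_comp n (fun P => maxBlockSize P < k) (fun x => ∀ i, x i < k) (by
    intro P hP r i
    exact lt_of_le_of_lt (enc_le_max P _) hP)
  have h2 := lower_count n k
  have h3 := comp_le_card n
  have hN := card_pos' n
  have h6 := Nat.four_pow_le_two_mul_self_mul_centralBinom n hn
  rw [card_U, ← two_mul, ← Nat.centralBinom_eq_two_mul_choose] at h3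
  set c := Nat.card {P : NCPart n // maxBlockSize P < k}
  have hq : 0 ≤ (1 - (1 / 2 : ℝ) ^ k) ^ (n + 1) := by
    apply pow_nonneg
    have : (1 / 2 : ℝ) ^ k ≤ 1 := pow_le_one₀ (by norm_num) (by norm_num)
    linarith
  set q := (1 - (1 / 2 : ℝ) ^ k) ^ (n + 1)
  have h1' : ((n : ℝ) + 1) * c ≤ 2 * 4 ^ n * q := le_trans (by exact_mod_cast h1) h2
  have h7 : (4 : ℝ) ^ n ≤ 2 * n * ((n + 1) * Fintype.card (NCPart n)) := by
    have : 4 ^ n ≤ 2 * n * ((n + 1) * Fintype.card (NCPart n)) :=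
      h6.trans (Nat.mul_le_mul_left _ h3)
    exact_mod_cast this
  have hN' : (0 : ℝ) < Fintype.card (NCPart n) := by exact_mod_cast hN
  rw [div_le_iff₀ hN']
  have hn1 : (0 : ℝ) < n + 1 := by positivity
  apply le_of_mul_le_mul_left _ hn1
  calc ((n : ℝ) + 1) * c ≤ 2 * 4 ^ n * q := h1'
    _ ≤ 2 * (2 * n * ((n + 1) * Fintype.card (NCPart n))) * q := by gcongr
    _ = _ := by ring

lemma bad_prob (ε : ℝ) (n : ℕ) (hn : 2 ≤ n) :
    (Nat.card {π : NCPart n //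
        ε < |(maxBlockSize π : ℝ) / Real.logb 2 (n : ℝ) - 1|} : ℝ) /
      (Fintype.card (NCPart n) : ℝ) ≤
    2 * (n : ℝ) ^ (-ε) + 4 * ((n : ℝ) * Real.exp (-(1 / 2) * (n : ℝ) ^ ε)) := by
  have hn0 : (0 : ℝ) < n := by positivity
  have hn1 : (1 : ℝ) < n := by exact_mod_cast hn
  set l := Real.logb 2 (n : ℝ) with hl
  have hlpos : 0 < l := Real.logb_pos (by norm_num) hn1
  have h2l : ∀ t : ℝ, (2 : ℝ) ^ (t * l) = (n : ℝ) ^ t := by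
    intro t
    rw [mul_comm, Real.rpow_mul (by norm_num), hl,
      Real.rpow_logb (by norm_num) (by norm_num) hn0]
  set K₁ := ⌈(1 + ε) * l⌉₊ with hK₁
  set K₂ := ⌈(1 - ε) * l⌉₊ with hK₂
  -- counting
  have hcard : Nat.card {π : NCPart n // ε < |(maxBlockSize π : ℝ) / l - 1|} ≤
      Nat.card {π : NCPart n // K₁ ≤ maxBlockSize π} +
        Nat.card {π : NCPart n // maxBlockSize π < K₂} := by
    classical
    simp only [Nat.card_eq_fintype_card, Fintype.card_subtype]
    refine le_trans (card_le_card ?_) (card_union_le _ _)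
    intro π
    simp only [mem_union, mem_filter, mem_univ, true_and]
    intro h
    rcases lt_abs.1 h with h | h
    · left
      rw [hK₁, Nat.ceil_le]
      have : 1 + ε < (maxBlockSize π : ℝ) / l := by linarith
      rw [lt_div_iff₀ hlpos] at this
      exact this.le
    · right
      rw [hK₂, Nat.lt_ceil]
      have : (maxBlockSize π : ℝ) / l < 1 - ε := by linarith
      rwa [div_lt_iff₀ hlpos] at this
  have hN : (0 : ℝ) < Fintype.card (NCPart n) := by exact_mod_cast card_pos' n
  have hu := upper_prob n K₁ (by omega)
  have hlw := lower_prob n K₂ (by omega)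
  have hA : ((n : ℝ) + 1) / 2 ^ K₁ ≤ 2 * (n : ℝ) ^ (-ε) := by
    have h1 : (n : ℝ) ^ (1 + ε) ≤ 2 ^ K₁ := by
      rw [← h2l, ← Real.rpow_natCast]
      exact Real.rpow_le_rpow_of_exponent_le (by norm_num) (Nat.le_ceil _)
    rw [Real.rpow_add hn0, Real.rpow_one] at h1
    have hp : 0 < (n : ℝ) ^ ε := Real.rpow_pos_of_pos hn0 _
    rw [Real.rpow_neg hn0.le]
    calc ((n : ℝ) + 1) / 2 ^ K₁ ≤ (2 * n) / (n * (n : ℝ) ^ ε) := by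
          gcongr
          linarith
      _ = _ := by field_simp
  have hB : 4 * (n : ℝ) * (1 - (1 / 2 : ℝ) ^ K₂) ^ (n + 1) ≤
      4 * ((n : ℝ) * Real.exp (-(1 / 2) * (n : ℝ) ^ ε)) := by
    rw [mul_assoc]
    have key : (1 - (1 / 2 : ℝ) ^ K₂) ^ (n + 1) ≤ Real.exp (-(1 / 2) * (n : ℝ) ^ ε) := by
      by_cases hK : K₂ = 0
      · rw [hK]
        simp only [pow_zero, sub_self, ne_eq, Nat.add_eq_zero_iff, one_ne_zero, and_false,
          not_false_eq_true, zero_pow]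
        exact (Real.exp_pos _).le
      · have hpos : 0 < (1 - ε) * l := Nat.ceil_pos.1 (Nat.pos_of_ne_zero hK)
        have hlt : (K₂ : ℝ) < (1 - ε) * l + 1 := Nat.ceil_lt_add_one hpos.le
        have h1 : (2 : ℝ) ^ K₂ ≤ (n : ℝ) ^ (1 - ε) * 2 := by
          rw [← h2l, ← Real.rpow_natCast, ← Real.rpow_add_one (by norm_num)]
          exact Real.rpow_le_rpow_of_exponent_le (by norm_num) hlt.le
        have hp : 0 < (n : ℝ) ^ ε := Real.rpow_pos_of_pos hn0 _
        rw [Real.rpow_sub hn0, Real.rpow_one] at h1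
        have h2 : (n : ℝ) ^ ε / (2 * n) ≤ (1 / 2 : ℝ) ^ K₂ := by
          rw [one_div, inv_pow, ← one_div, div_le_div_iff₀ (by positivity) (by positivity), one_mul]
          calc (n : ℝ) ^ ε * 2 ^ K₂ ≤ (n : ℝ) ^ ε * (n / (n : ℝ) ^ ε * 2) := by gcongr
            _ = 2 * n := by field_simp
        set q := (1 / 2 : ℝ) ^ K₂ with hq
        have hq0 : 0 ≤ q := by positivity
        have hq1 : q ≤ 1 := pow_le_one₀ (by norm_num) (by norm_num)
        calc (1 - q) ^ (n + 1) ≤ (1 - q) ^ n :=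
              pow_le_pow_of_le_one (by linarith) (by linarith) (Nat.le_succ n)
          _ ≤ (Real.exp (-q)) ^ n := by
              exact pow_le_pow_left₀ (by linarith) (Real.one_sub_le_exp_neg q) n
          _ = Real.exp (n * -q) := (Real.exp_nat_mul _ _).symm
          _ ≤ _ := by
              apply Real.exp_le_exp.2
              have : (n : ℝ) * ((n : ℝ) ^ ε / (2 * n)) ≤ n * q := by gcongr
              have e : (n : ℝ) * ((n : ℝ) ^ ε / (2 * n)) = 1 / 2 * (n : ℝ) ^ ε := by field_simp
              linarith
    gcongr
  calc _ ≤ ((Nat.card {π : NCPart n // K₁ ≤ maxBlockSize π} +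
        Nat.card {π : NCPart n // maxBlockSize π < K₂} : ℕ) : ℝ) / Fintype.card (NCPart n) := by
        gcongr
    _ = _ := by rw [Nat.cast_add, add_div]
    _ ≤ _ := add_le_add (hu.trans hA) (hlw.trans hB)

end NCLLN

/-- Law of large numbers for the largest block: `L_n / log₂ n → 1` in
probability, i.e. for every `ε > 0` the proportion of non-crossing partitions `π` of `[n]`
with `|L(π)/log₂ n − 1| > ε` tends to `0` as `n → ∞`. -/
theorem maxBlockSize_LLN (ε : ℝ) (hε : 0 < ε) :
    Tendsto
      (fun n : ℕ =>
        (Nat.card {π : NCPart n //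
            ε < |(maxBlockSize π : ℝ) / Real.logb 2 (n : ℝ) - 1|} : ℝ) /
          (Fintype.card (NCPart n) : ℝ))
      atTop (nhds 0) := by
  have hb : Tendsto (fun n : ℕ => 2 * (n : ℝ) ^ (-ε) +
      4 * ((n : ℝ) * Real.exp (-(1 / 2) * (n : ℝ) ^ ε))) atTop (nhds 0) := by
    have h1 : Tendsto (fun n : ℕ => (n : ℝ) ^ (-ε)) atTop (nhds 0) :=
      (tendsto_rpow_neg_atTop hε).comp tendsto_natCast_atTop_atTop
    have h2 : Tendsto (fun n : ℕ => ((n : ℝ) * Real.exp (-(1 / 2) * (n : ℝ) ^ ε)))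
        atTop (nhds 0) := by
      have h3 := ((tendsto_rpow_mul_exp_neg_mul_atTop_nhds_zero (1 / ε) (1 / 2)
        (by norm_num)).comp (tendsto_rpow_atTop hε)).comp (tendsto_natCast_atTop_atTop (R := ℝ))
      refine h3.congr fun n => ?_
      simp only [Function.comp]
      rw [← Real.rpow_mul (Nat.cast_nonneg n), mul_one_div_cancel hε.ne', Real.rpow_one]
    simpa using (h1.const_mul 2).add (h2.const_mul 4)
  refine squeeze_zero' (Eventually.of_forall fun n => by positivity) ?_ hb
  filter_upwards [eventually_ge_atTop 2] with n hn
  exact NCLLN.bad_prob ε n hn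
end
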